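/- arXiv:1401.2707 — 2 statements merged into one kernel-verified Lean document; each statement's English description precedes it below -/
import Mathlib

section
/- For every ε > 0 there exist θ > 0, K and N such that for all n ≥ N, all k ≥ K dividing n, and all m with |m/n − 1/3| ≤ θ, the set E = {S ∈ I_{0,m} : N(S) > (log k)^{3n/k}·m!·2^m} satisfies Σ_{S ∈ E} N(S)² ≤ ε·(m!·2^m)²·|I_{0,m}|. -/
/-- A ROD (rooted, ordered, directed) `k`-cycle factor on `{1,…,n}`: a sequence of
`n/k` directed cycles, each on exactly `k` vertices and rooted at its first entry, whose
vertex sets partition `{1,…,n}`. -/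
def RODFactor (n k : ℕ) : Type :=
  {f : Fin (n / k) → Fin k → Fin n //
    Function.Bijective fun p : Fin (n / k) × Fin k => f p.1 p.2}

/-- The underlying undirected graph of the ROD factor `F` contains every edge of `S`. -/
def RODContains {n k : ℕ} (F : RODFactor n k) (S : SimpleGraph (Fin n)) : Prop :=
  ∀ u v : Fin n, S.Adj u v → ∃ (c : Fin (n / k)) (i : Fin k),
    (F.1 c i = u ∧ F.1 c ⟨((i : ℕ) + 1) % k, Nat.mod_lt _ i.pos⟩ = v) ∨
    (F.1 c i = v ∧ F.1 c ⟨((i : ℕ) + 1) % k, Nat.mod_lt _ i.pos⟩ = u)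

/-- `N(S)`: the number of ROD `k`-cycle factors containing the graph `S`. -/
noncomputable def NS {n : ℕ} (k : ℕ) (S : SimpleGraph (Fin n)) : ℕ :=
  Nat.card {F : RODFactor n k // RODContains F S}

/-- The connected component `c` of `G` is a path on at least 2 vertices. -/
def IsPathComponent {V : Type*} (G : SimpleGraph V) (c : G.ConnectedComponent) : Prop :=
  ∃ (ℓ : ℕ) (v : Fin ℓ → V), 2 ≤ ℓ ∧ Function.Injective v ∧ Set.range v = c.supp ∧
    ∀ a b : Fin ℓ, G.Adj (v a) (v b) ↔ ((a : ℕ) + 1 = b ∨ (b : ℕ) + 1 = a)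

/-- `G ∈ I_{0,m}`: `G` has exactly `m` connected components, each a path on at least 2
vertices. -/
def PathsGraph {n : ℕ} (G : SimpleGraph (Fin n)) (m : ℕ) : Prop :=
  Nat.card G.ConnectedComponent = m ∧ ∀ c : G.ConnectedComponent, IsPathComponent G c


open Finset in
theorem order_determines {n : ℕ} (φ ψ : Fin n → Fin n) (hφ : Function.Injective φ)
    (hψ : Function.Injective ψ) (h : ∀ u w, φ u < φ w ↔ ψ u < ψ w) : φ = ψ := by
  have key : ∀ (χ : Fin n → Fin n), Function.Injective χ → ∀ u,
      (univ.filter (fun w => χ w < χ u)).card = (χ u : ℕ) := by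
    intro χ hχ u
    have hb : Function.Bijective χ := Finite.injective_iff_bijective.mp hχ
    rw [← Fin.card_Iio (χ u)]
    apply Finset.card_bij (fun w _ => χ w)
    · intro a ha; simpa using ha
    · intro a _ b _ hab; exact hχ hab
    · intro b hb'
      obtain ⟨a, rfl⟩ := hb.2 b
      exact ⟨a, by simpa using hb', rfl⟩
  funext u
  apply Fin.ext
  rw [← key φ hφ u, ← key ψ hψ u]
  congr 1
  ext w
  simp [h]

/-- Moving along `S` inside a component does not change the order relative to a vertex outside. -/
theorem lt_iff_of_reach {n : ℕ} (S : SimpleGraph (Fin n)) (φ : Fin n → Fin n)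
    (hφ : Function.Injective φ)
    (hadj : ∀ u v, S.Adj u v → (φ u : ℕ) + 1 = φ v ∨ (φ v : ℕ) + 1 = φ u)
    (w u v : Fin n) (huv : S.Reachable u v) (huw : ¬ S.Reachable u w) :
    (φ u < φ w ↔ φ v < φ w) ∧ (φ w < φ u ↔ φ w < φ v) := by
  obtain ⟨p⟩ := huv
  induction p with
  | nil => exact ⟨Iff.rfl, Iff.rfl⟩
  | @cons a b c hab p ih =>
    have hbw : ¬ S.Reachable b w := fun h => huw (hab.reachable.trans h)
    have ih := ih hbw
    have h1 : φ a ≠ φ w := fun h => huw (by rw [hφ h])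
    have h2 : φ b ≠ φ w := fun h => hbw (by rw [hφ h])
    have h3 := hadj a b hab
    rw [← ih.1, ← ih.2]
    simp only [Fin.lt_def, ne_eq, Fin.ext_iff] at *
    omega

/-- Along a path the labelling moves with constant sign. -/
theorem path_sign (ℓ : ℕ) (f : ℕ → ℤ) (hinj : ∀ a b, a < ℓ → b < ℓ → f a = f b → a = b)
    (hadj : ∀ a, a + 1 < ℓ → f (a+1) = f a + 1 ∨ f (a+1) = f a - 1) (a : ℕ) (ha : a < ℓ) :
    f a = f 0 + (f 1 - f 0) * a := by
  have step : ∀ a, a + 1 < ℓ → f (a+1) - f a = f 1 - f 0 := by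
    intro a
    induction a with
    | zero => intro _; simp
    | succ a ih =>
      intro h
      have h1 := ih (by omega)
      have h3 := hadj a (by omega)
      have h4 := hadj (a+1) h
      have h5 : f (a+1+1) ≠ f a := fun h' => by
        have := hinj _ _ h (by omega) h'
        omega
      omega
  induction a with
  | zero => simp
  | succ a ih =>
    have := step a ha
    have h1 := ih (by omega)
    push_cast
    linarith

open Finset in
theorem cardPos {n m : ℕ} (S : SimpleGraph (Fin n)) (hS : PathsGraph S m) :
    Nat.card {φ : Fin n → Fin n // Function.Injective φ ∧
      ∀ u v, S.Adj u v → (φ u : ℕ) + 1 = φ v ∨ (φ v : ℕ) + 1 = φ u} ≤ m.factorial * 2 ^ m := by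
  classical
  obtain ⟨hm, hS⟩ := hS
  choose ℓ v h2 hinj hrange hadj using hS
  let rep : S.ConnectedComponent → Fin n := fun c => v c ⟨0, by have := h2 c; omega⟩
  let snd : S.ConnectedComponent → Fin n := fun c => v c ⟨1, by have := h2 c; omega⟩
  have hmem : ∀ c x, S.connectedComponentMk (v c x) = c := by
    intro c x
    have : v c x ∈ c.supp := by rw [← hrange c]; exact ⟨x, rfl⟩
    exact this
  have hrep : ∀ c, S.connectedComponentMk (rep c) = c := fun c => hmem c _
  have hcard : Fintype.card S.ConnectedComponent = m := by rw [← hm, Nat.card_eq_fintype_card]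
  let rk : (Fin n → Fin n) → S.ConnectedComponent → Fin m := fun φ c =>
    ⟨(univ.filter (fun c' => φ (rep c') < φ (rep c))).card, by
      rw [← hcard, ← Finset.card_univ]
      apply Finset.card_lt_card
      rw [Finset.ssubset_univ_iff]
      intro h
      have : c ∈ univ.filter (fun c' => φ (rep c') < φ (rep c)) := by rw [h]; simp
      simp at this⟩
  have rk_lt : ∀ φ c c', φ (rep c) < φ (rep c') → rk φ c < rk φ c' := by
    intro φ c c' h
    simp only [rk, Fin.mk_lt_mk]
    apply Finset.card_lt_card
    rw [Finset.ssubset_iff_of_subset]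
    · exact ⟨c, by simpa using h, by simp⟩
    · intro d hd
      simp only [mem_filter, mem_univ, true_and] at hd ⊢
      exact hd.trans h
  have rep_inj : Function.Injective rep := by
    intro c c' h
    rw [← hrep c, ← hrep c', h]
  have rk_inj : ∀ φ, Function.Injective φ → Function.Injective (rk φ) := by
    intro φ hφ c c' h
    by_contra hne
    have : φ (rep c) ≠ φ (rep c') := fun h' => hne (rep_inj (hφ h'))
    rcases lt_or_gt_of_ne this with h' | h'
    · exact absurd h (rk_lt φ _ _ h').ne
    · exact absurd h (rk_lt φ _ _ h').ne'
  have rk_iff : ∀ φ, Function.Injective φ → ∀ c c', φ (rep c) < φ (rep c') ↔ rk φ c < rk φ c' := by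
    intro φ hφ c c'
    refine ⟨rk_lt φ c c', fun h => ?_⟩
    by_contra hn
    rcases (not_lt.mp hn).lt_or_eq with h' | h'
    · exact absurd (rk_lt φ _ _ h') (not_lt.mpr h.le)
    · have := rep_inj (hφ h'); subst this; exact lt_irrefl _ h
  let X := {φ : Fin n → Fin n // Function.Injective φ ∧
      ∀ u v, S.Adj u v → (φ u : ℕ) + 1 = φ v ∨ (φ v : ℕ) + 1 = φ u}
  let enc : X → (S.ConnectedComponent ↪ Fin m) × (S.ConnectedComponent → Bool) := fun φ =>
    (⟨rk φ.1, rk_inj φ.1 φ.2.1⟩, fun c => decide (φ.1 (rep c) < φ.1 (snd c)))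
  have form : ∀ φ : X, ∀ c (a : Fin (ℓ c)), ((φ.1 (v c a) : ℕ) : ℤ) =
      (φ.1 (rep c) : ℕ) + (if φ.1 (rep c) < φ.1 (snd c) then 1 else -1) * (a : ℕ) := by
    intro φ c a
    have hℓ := h2 c
    let f : ℕ → ℤ := fun a => if h : a < ℓ c then ((φ.1 (v c ⟨a, h⟩) : ℕ) : ℤ) else 0
    have hadj' : ∀ a, a + 1 < ℓ c → f (a+1) = f a + 1 ∨ f (a+1) = f a - 1 := by
      intro a ha
      have ha' : a < ℓ c := by omega
      simp only [f, ha, ha', dif_pos]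
      have := φ.2.2 (v c ⟨a, ha'⟩) (v c ⟨a+1, ha⟩) ((hadj c _ _).mpr (Or.inl rfl))
      omega
    have := path_sign (ℓ c) f (by
      intro a b ha hb h
      simp only [f, ha, hb, dif_pos] at h
      have := hinj c (φ.2.1 (Fin.ext (by exact_mod_cast h)))
      simpa using this) hadj' a a.2
    have e0 : f 0 = (φ.1 (rep c) : ℕ) := by simp only [f]; rw [dif_pos (by omega)]
    have e1 : f 1 = (φ.1 (snd c) : ℕ) := by simp only [f]; rw [dif_pos (by omega)]
    have ea : f a = (φ.1 (v c a) : ℕ) := by simp only [f]; rw [dif_pos a.2]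
    have h01 := hadj' 0 (by omega)
    rw [← ea, ← e0, this]
    congr 2
    simp only [Fin.lt_def]
    simp only [zero_add] at h01
    split_ifs <;> omega
  have enc_inj : Function.Injective enc := by
    intro φ ψ h
    have h1 : rk φ.1 = rk ψ.1 := by
      have := congrArg (fun z => (z.1 : S.ConnectedComponent → Fin m)) h
      simpa [enc] using this
    have h2' : ∀ c, φ.1 (rep c) < φ.1 (snd c) ↔ ψ.1 (rep c) < ψ.1 (snd c) := by
      intro c
      have := congrArg (fun z => z.2 c) h
      simpa [enc] using this
    apply Subtype.ext
    apply order_determines _ _ φ.2.1 ψ.2.1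
    intro u w
    by_cases hc : S.connectedComponentMk u = S.connectedComponentMk w
    · obtain ⟨a, ha⟩ : u ∈ Set.range (v (S.connectedComponentMk u)) := by
        rw [hrange]; rfl
      obtain ⟨b, hb⟩ : w ∈ Set.range (v (S.connectedComponentMk u)) := by
        rw [hrange]; exact hc.symm
      generalize S.connectedComponentMk u = c at *
      have e1 := form φ c a
      have e2 := form φ c b
      have e3 := form ψ c a
      have e4 := form ψ c b
      rw [ha] at e1 e3
      rw [hb] at e2 e4
      have := h2' c
      rw [Fin.lt_def, Fin.lt_def]
      by_cases hh : φ.1 (rep c) < φ.1 (snd c)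
      · have hh' := this.mp hh
        simp only [hh, hh', if_true] at e1 e2 e3 e4
        omega
      · have hh' : ¬ (ψ.1 (rep c) < ψ.1 (snd c)) := fun t => hh (this.mpr t)
        simp only [hh, hh', if_false] at e1 e2 e3 e4
        omega
    · have hred : ∀ χ : X, χ.1 u < χ.1 w ↔
          χ.1 (rep (S.connectedComponentMk u)) < χ.1 (rep (S.connectedComponentMk w)) := by
        intro χ
        have r1 : S.Reachable u (rep (S.connectedComponentMk u)) :=
          SimpleGraph.ConnectedComponent.exact (hrep _).symm
        have r2 : S.Reachable w (rep (S.connectedComponentMk w)) :=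
          SimpleGraph.ConnectedComponent.exact (hrep _).symm
        have n1 : ¬ S.Reachable u w := fun h => hc (SimpleGraph.ConnectedComponent.sound h)
        rw [(lt_iff_of_reach S χ.1 χ.2.1 χ.2.2 w _ _ r1 n1).1]
        exact (lt_iff_of_reach S χ.1 χ.2.1 χ.2.2 _ _ _ r2
          (fun h => n1 (r1.trans h.symm))).2
      rw [hred φ, hred ψ, rk_iff _ φ.2.1, rk_iff _ ψ.2.1, h1]
  have := Nat.card_le_card_of_injective enc enc_inj
  refine this.trans (le_of_eq ?_)
  rw [Nat.card_eq_fintype_card, Fintype.card_prod, Fintype.card_embedding_eq, Fintype.card_fin,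
    hcard, Nat.descFactorial_self, Fintype.card_fun, Fintype.card_bool, hcard]

/-- The disjoint union of paths on `a i + 2` vertices, laid out through `e`. -/
def layGraph {n m : ℕ} (a : Fin m → ℕ) (e : (Σ i : Fin m, Fin (a i + 2)) ≃ Fin n) :
    SimpleGraph (Fin n) where
  Adj u v := (e.symm u).1 = (e.symm v).1 ∧
    (((e.symm u).2 : ℕ) + 1 = (e.symm v).2 ∨ ((e.symm v).2 : ℕ) + 1 = (e.symm u).2)
  symm := ⟨fun u v h => ⟨h.1.symm, h.2.symm⟩⟩
  loopless := ⟨fun u h => by have := h.2; omega⟩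

theorem sigma_snd_val {n m : ℕ} (a : Fin m → ℕ) (e : (Σ i : Fin m, Fin (a i + 2)) ≃ Fin n)
    (i : Fin m) (x : Fin (a i + 2)) : ((e.symm (e ⟨i, x⟩)).2 : ℕ) = x :=
  congrArg (fun z : (Σ i : Fin m, Fin (a i + 2)) => (z.2 : ℕ)) (e.symm_apply_apply ⟨i, x⟩)

theorem layGraph_blk {n m : ℕ} (a : Fin m → ℕ) (e : (Σ i : Fin m, Fin (a i + 2)) ≃ Fin n)
    (u v : Fin n) (h : (layGraph a e).Reachable u v) : (e.symm u).1 = (e.symm v).1 := by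
  obtain ⟨p⟩ := h
  induction p with
  | nil => rfl
  | cons hab p ih => exact hab.1.trans ih

theorem layGraph_reach0 {n m : ℕ} (a : Fin m → ℕ) (e : (Σ i : Fin m, Fin (a i + 2)) ≃ Fin n)
    (i : Fin m) (x : ℕ) (hx : x < a i + 2) :
    (layGraph a e).Reachable (e ⟨i, ⟨0, by omega⟩⟩) (e ⟨i, ⟨x, hx⟩⟩) := by
  induction x with
  | zero => exact SimpleGraph.Reachable.refl _
  | succ x ih =>
    refine (ih (by omega)).trans (SimpleGraph.Adj.reachable ?_)
    refine ⟨by simp, Or.inl ?_⟩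
    rw [sigma_snd_val, sigma_snd_val]

theorem layGraph_reach_iff {n m : ℕ} (a : Fin m → ℕ) (e : (Σ i : Fin m, Fin (a i + 2)) ≃ Fin n)
    (u v : Fin n) : (layGraph a e).Reachable u v ↔ (e.symm u).1 = (e.symm v).1 := by
  refine ⟨layGraph_blk a e u v, fun h => ?_⟩
  obtain ⟨⟨i, x⟩, rfl⟩ := e.surjective u
  obtain ⟨⟨j, y⟩, rfl⟩ := e.surjective v
  simp only [Equiv.symm_apply_apply] at h
  subst h
  exact (layGraph_reach0 a e i x x.2).symm.trans (layGraph_reach0 a e i y y.2)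

theorem layGraph_paths {n m : ℕ} (a : Fin m → ℕ) (e : (Σ i : Fin m, Fin (a i + 2)) ≃ Fin n) :
    PathsGraph (layGraph a e) m := by
  have hmk : ∀ (i : Fin m) (u : Fin n), (layGraph a e).connectedComponentMk u =
      (layGraph a e).connectedComponentMk (e ⟨i, ⟨0, by omega⟩⟩) ↔ (e.symm u).1 = i := by
    intro i u
    rw [SimpleGraph.ConnectedComponent.eq, layGraph_reach_iff]
    simp
  have hsurj : ∀ c : (layGraph a e).ConnectedComponent, ∃ i : Fin m,
      (layGraph a e).connectedComponentMk (e ⟨i, ⟨0, by omega⟩⟩) = c := by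
    intro c
    induction c using SimpleGraph.ConnectedComponent.ind with
    | h u => exact ⟨(e.symm u).1, ((hmk _ u).mpr rfl).symm⟩
  constructor
  · have : Function.Bijective (fun i : Fin m =>
        (layGraph a e).connectedComponentMk (e ⟨i, ⟨0, by omega⟩⟩)) := by
      refine ⟨fun i j h => ?_, hsurj⟩
      have := (hmk j _).mp h
      simpa using this
    rw [← Nat.card_eq_of_bijective _ this, Nat.card_eq_fintype_card, Fintype.card_fin]
  · intro c
    obtain ⟨i, rfl⟩ := hsurj c
    refine ⟨a i + 2, fun x => e ⟨i, x⟩, by omega, ?_, ?_, ?_⟩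
    · intro x y h
      have := e.injective h
      simpa using this
    · ext u
      rw [SimpleGraph.ConnectedComponent.mem_supp_iff, hmk]
      constructor
      · rintro ⟨x, rfl⟩; simp
      · intro h
        obtain ⟨⟨j, y⟩, rfl⟩ := e.surjective u
        simp only [Equiv.symm_apply_apply] at h
        subst h
        exact ⟨y, rfl⟩
    · intro x y
      change _ ∧ _ ↔ _
      rw [sigma_snd_val, sigma_snd_val]
      simp

/-- Layouts with `m` blocks and total excess `t`. -/
abbrev Lay (n m t : ℕ) : Type :=
  Σ a : {a : Fin m →₀ ℕ // a ∈ Finset.finsuppAntidiag (Finset.univ : Finset (Fin m)) t},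
    ((Σ i : Fin m, Fin (a.1 i + 2)) ≃ Fin n)

theorem card_lay (m t n : ℕ) (hn : n = 2 * m + t) :
    Nat.card (Lay n m t) = m.multichoose t * n.factorial := by
  classical
  have h1 : ∀ a : {a : Fin m →₀ ℕ // a ∈ Finset.finsuppAntidiag (Finset.univ : Finset (Fin m)) t},
      Fintype.card ((Σ i : Fin m, Fin (a.1 i + 2)) ≃ Fin n) = n.factorial := by
    intro a
    have ha := (Finset.mem_finsuppAntidiag.mp a.2).1
    have hc : Fintype.card (Σ i : Fin m, Fin (a.1 i + 2)) = n := by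
      rw [Fintype.card_sigma]
      simp only [Fintype.card_fin, Finset.sum_add_distrib, ha]
      simp
      omega
    rw [Fintype.card_equiv (Fintype.equivFinOfCardEq hc), hc]
  rw [Nat.card_eq_fintype_card, Fintype.card_sigma, Finset.sum_congr rfl (fun a _ => h1 a)]
  rw [Finset.sum_const, Finset.card_univ, Fintype.card_coe,
    Finset.card_finsuppAntidiag_nat_eq_multichoose]
  simp

theorem card_fiber (m t n : ℕ) (S : SimpleGraph (Fin n)) (hS : PathsGraph S m) :
    Nat.card {L : Lay n m t // layGraph (L.1.1 : Fin m → ℕ) L.2 = S} ≤ m.factorial * 2 ^ m := by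
  classical
  obtain ⟨hm, hS⟩ := hS
  choose ℓ v h2 hinj hrange hadj using hS
  let rep : S.ConnectedComponent → Fin n := fun c => v c ⟨0, by have := h2 c; omega⟩
  let snd : S.ConnectedComponent → Fin n := fun c => v c ⟨1, by have := h2 c; omega⟩
  have hmem : ∀ c x, S.connectedComponentMk (v c x) = c := by
    intro c x
    have : v c x ∈ c.supp := by rw [← hrange c]; exact ⟨x, rfl⟩
    exact this
  have hcard : Fintype.card S.ConnectedComponent = m := by rw [← hm, Nat.card_eq_fintype_card]
  let X := {L : Lay n m t // layGraph (L.1.1 : Fin m → ℕ) L.2 = S}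
  let blk : X → Fin n → Fin m := fun L u => (L.1.2.symm u).1
  let crd : X → Fin n → ℕ := fun L u => (L.1.2.symm u).2
  let st : (L : X) → Fin m → Fin n := fun L i => L.1.2 ⟨i, ⟨0, by omega⟩⟩
  have hre : ∀ (L : X) u w, S.connectedComponentMk u = S.connectedComponentMk w ↔
      blk L u = blk L w := by
    intro L u w
    rw [SimpleGraph.ConnectedComponent.eq]
    have := layGraph_reach_iff (L.1.1.1 : Fin m → ℕ) L.1.2 u w
    rw [L.2] at this
    exact this
  have hA : ∀ (L : X) u w, S.Adj u w → crd L u + 1 = crd L w ∨ crd L w + 1 = crd L u := by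
    intro L u w h
    rw [← L.2] at h
    exact h.2
  have blkst : ∀ (L : X) i, blk L (st L i) = i := by intro L i; simp [blk, st]
  have hext : ∀ (L : X) u w, blk L u = blk L w → crd L u = crd L w → u = w := by
    intro L u w h1 h2
    apply L.1.2.symm.injective
    refine Sigma.ext h1 ?_
    apply (Fin.heq_ext_iff (by rw [show (L.1.2.symm u).1 = (L.1.2.symm w).1 from h1])).mpr
    exact h2
  let tau : X → Fin m → S.ConnectedComponent := fun L i => S.connectedComponentMk (st L i)
  have tau_inj : ∀ L, Function.Injective (tau L) := by
    intro L i j h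
    have := (hre L _ _).mp h
    rwa [blkst, blkst] at this
  have tau_blk : ∀ L u, tau L (blk L u) = S.connectedComponentMk u := by
    intro L u
    exact (hre L _ _).mpr (blkst L _)
  let bb : X → S.ConnectedComponent → Bool := fun L c => decide (crd L (rep c) < crd L (snd c))
  have form : ∀ L : X, ∀ c (x : Fin (ℓ c)), (crd L (v c x) : ℤ) =
      crd L (rep c) + (if crd L (rep c) < crd L (snd c) then 1 else -1) * (x : ℕ) := by
    intro L c a
    have hℓ := h2 c
    let f : ℕ → ℤ := fun a => if h : a < ℓ c then (crd L (v c ⟨a, h⟩) : ℤ) else 0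
    have hadj' : ∀ a, a + 1 < ℓ c → f (a+1) = f a + 1 ∨ f (a+1) = f a - 1 := by
      intro a ha
      have ha' : a < ℓ c := by omega
      simp only [f, ha, ha', dif_pos]
      have := hA L (v c ⟨a, ha'⟩) (v c ⟨a+1, ha⟩) ((hadj c _ _).mpr (Or.inl rfl))
      omega
    have := path_sign (ℓ c) f (by
      intro a b ha hb h
      simp only [f, ha, hb, dif_pos] at h
      have := hinj c (hext L (v c ⟨a, ha⟩) (v c ⟨b, hb⟩)
        ((hre L _ _).mp ((hmem c _).trans (hmem c _).symm)) (by exact_mod_cast h))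
      simpa using this) hadj' a a.2
    have e0 : f 0 = crd L (rep c) := by simp only [f]; rw [dif_pos (by omega)]
    have e1 : f 1 = crd L (snd c) := by simp only [f]; rw [dif_pos (by omega)]
    have ea : f a = crd L (v c a) := by simp only [f]; rw [dif_pos a.2]
    have h01 := hadj' 0 (by omega)
    rw [← ea, ← e0, this]
    congr 2
    simp only [zero_add] at h01
    split_ifs <;> omega
  have form2 : ∀ L : X, ∀ i, L.1.1.1 i + 2 = ℓ (tau L i) ∧ ∀ (x : Fin (ℓ (tau L i))),
      crd L (v (tau L i) x) = if crd L (rep (tau L i)) < crd L (snd (tau L i)) then (x : ℕ)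
        else ℓ (tau L i) - 1 - x := by
    intro L i
    have hℓ := h2 (tau L i)
    have e1 : ∀ z : Fin (L.1.1.1 i + 2), ∃ x, v (tau L i) x = L.1.2 ⟨i, z⟩ := by
      intro z
      have : L.1.2 ⟨i, z⟩ ∈ Set.range (v (tau L i)) := by
        rw [hrange]
        change S.connectedComponentMk _ = tau L i
        rw [← tau_blk L]
        simp [blk]
      exact this
    obtain ⟨x0, hx0⟩ := e1 ⟨0, by omega⟩
    obtain ⟨x1, hx1⟩ := e1 ⟨L.1.1.1 i + 1, by omega⟩
    have f0 := form L _ x0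
    have f1 := form L _ x1
    have c0 : crd L (v (tau L i) x0) = 0 := by rw [hx0]; exact sigma_snd_val _ _ _ _
    have c1 : crd L (v (tau L i) x1) = L.1.1.1 i + 1 := by rw [hx1]; exact sigma_snd_val _ _ _ _
    have fl := form L _ (⟨ℓ (tau L i) - 1, by omega⟩ : Fin (ℓ (tau L i)))
    have fz := form L _ (⟨0, by omega⟩ : Fin (ℓ (tau L i)))
    have hb : ∀ x, crd L (v (tau L i) x) < L.1.1.1 i + 2 := by
      intro x
      have h1 : blk L (v (tau L i) x) = i := by
        apply tau_inj L
        rw [tau_blk, hmem]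
      have := (L.1.2.symm (v (tau L i) x)).2.2
      change crd L _ < L.1.1.1 (blk L _) + 2 at this
      rwa [h1] at this
    have bl := hb (⟨ℓ (tau L i) - 1, by omega⟩ : Fin (ℓ (tau L i)))
    have bz := hb (⟨0, by omega⟩ : Fin (ℓ (tau L i)))
    have := x0.2
    have := x1.2
    rw [c0] at f0
    rw [c1] at f1
    by_cases hs : crd L (rep (tau L i)) < crd L (snd (tau L i))
    · simp only [hs, if_true] at f0 f1 fl fz ⊢
      refine ⟨by omega, fun x => ?_⟩
      have fx := form L _ x
      simp only [hs, if_true] at fx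
      omega
    · simp only [hs, if_false] at f0 f1 fl fz ⊢
      refine ⟨by omega, fun x => ?_⟩
      have fx := form L _ x
      simp only [hs, if_false] at fx
      have := x.2
      omega
  let enc : X → (Fin m ↪ S.ConnectedComponent) × (S.ConnectedComponent → Bool) := fun L =>
    (⟨tau L, tau_inj L⟩, bb L)
  have enc_inj : Function.Injective enc := by
    intro L L' h
    have ht : tau L = tau L' := by
      have := congrArg (fun z => (z.1 : Fin m → S.ConnectedComponent)) h
      simpa [enc] using this
    have hb' : ∀ c, crd L (rep c) < crd L (snd c) ↔ crd L' (rep c) < crd L' (snd c) := by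
      intro c
      have := congrArg (fun z => z.2 c) h
      simpa [enc, bb] using this
    have ha : L.1.1.1 = L'.1.1.1 := by
      ext i
      have h1 := (form2 L i).1
      have h2 := (form2 L' i).1
      rw [ht] at h1
      omega
    have hblk : ∀ u, blk L u = blk L' u := by
      intro u
      apply tau_inj L
      rw [tau_blk, ht, tau_blk]
    have hcrd : ∀ u, crd L u = crd L' u := by
      intro u
      have hu : S.connectedComponentMk u = tau L (blk L u) := (tau_blk L u).symm
      obtain ⟨x, hx⟩ : u ∈ Set.range (v (tau L (blk L u))) := by
        rw [hrange]; exact hu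
      have h1 := (form2 L (blk L u)).2 x
      have h2 := (form2 L' (blk L u)).2
      rw [← ht] at h2
      have h2 := h2 x
      rw [hx] at h1 h2
      rw [h1, h2]
      simp only [hb']
    obtain ⟨⟨⟨a, ha1⟩, e⟩, hL⟩ := L
    obtain ⟨⟨⟨a', ha1'⟩, e'⟩, hL'⟩ := L'
    simp only at ha
    subst ha
    have : e = e' := by
      apply Equiv.symm_bijective.injective
      ext1 u
      refine Sigma.ext (hblk u) ?_
      apply (Fin.heq_ext_iff (by
        rw [show (e.symm u).1 = (e'.symm u).1 from hblk u])).mpr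
      exact hcrd u
    subst this
    rfl
  have := Nat.card_le_card_of_injective enc enc_inj
  refine this.trans (le_of_eq ?_)
  rw [Nat.card_eq_fintype_card, Fintype.card_prod, Fintype.card_embedding_eq, Fintype.card_fin,
    hcard, Nat.descFactorial_self, Fintype.card_fun, Fintype.card_bool, hcard]

theorem card_I_lower (m t n : ℕ) (hn : n = 2 * m + t) :
    m.multichoose t * n.factorial ≤
      Nat.card {G : SimpleGraph (Fin n) // PathsGraph G m} * (m.factorial * 2 ^ m) := by
  classical
  rw [← card_lay m t n hn]
  let f : Lay n m t → {G : SimpleGraph (Fin n) // PathsGraph G m} := fun L =>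
    ⟨layGraph (L.1.1 : Fin m → ℕ) L.2, layGraph_paths _ _⟩
  have e := Nat.card_congr (Equiv.sigmaFiberEquiv f)
  rw [← e, Nat.card_sigma]
  rw [Nat.card_eq_fintype_card, ← Finset.card_univ, ← smul_eq_mul]
  apply Finset.sum_le_card_nsmul
  intro G _
  refine le_trans (le_of_eq ?_) (card_fiber m t n G.1 G.2)
  apply Nat.card_congr
  exact Equiv.subtypeEquivRight (fun L => by simp [f, Subtype.ext_iff])

/-- Cyclic successor in `Fin k`. -/
def nx {k : ℕ} (i : Fin k) : Fin k := ⟨((i : ℕ) + 1) % k, Nat.mod_lt _ i.pos⟩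

theorem nx_val {k : ℕ} (i : Fin k) : (nx i : ℕ) = if (i : ℕ) + 1 = k then 0 else (i : ℕ) + 1 := by
  have := i.2
  simp only [nx]
  split_ifs with h
  · rw [h, Nat.mod_self]
  · exact Nat.mod_eq_of_lt (by omega)

theorem nx_inj {k : ℕ} : Function.Injective (nx : Fin k → Fin k) := by
  intro i j h
  have h := congrArg Fin.val h
  rw [nx_val, nx_val] at h
  have := i.2
  have := j.2
  apply Fin.ext
  split_ifs at h <;> omega

theorem nx_surj {k : ℕ} : Function.Surjective (nx : Fin k → Fin k) :=
  Finite.injective_iff_surjective.mp nx_inj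

open Classical in
/-- Positions of the cyclic edges of cycle `c` that are not in `S`. -/
noncomputable def gap {n k : ℕ} (F : RODFactor n k) (S : SimpleGraph (Fin n)) (c : Fin (n / k)) :
    Finset (Fin k) :=
  Finset.univ.filter (fun i => ¬ S.Adj (F.1 c i) (F.1 c (nx i)))

theorem mem_gap {n k : ℕ} (F : RODFactor n k) (S : SimpleGraph (Fin n)) (c : Fin (n / k))
    (i : Fin k) : i ∈ gap F S c ↔ ¬ S.Adj (F.1 c i) (F.1 c (nx i)) := by
  classical
  simp [gap]

theorem F_inj {n k : ℕ} (F : RODFactor n k) {c c' : Fin (n / k)} {i i' : Fin k}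
    (h : F.1 c i = F.1 c' i') : c = c' ∧ i = i' := by
  have := F.2.1 (a₁ := (c, i)) (a₂ := (c', i')) h
  simpa using this

theorem F_surj {n k : ℕ} (F : RODFactor n k) (u : Fin n) : ∃ c i, F.1 c i = u := by
  obtain ⟨⟨c, i⟩, h⟩ := F.2.2 u
  exact ⟨c, i, h⟩

theorem adj_iff {n k : ℕ} (F : RODFactor n k) (S : SimpleGraph (Fin n)) (h : RODContains F S)
    (u v : Fin n) : S.Adj u v ↔ ∃ c i, i ∉ gap F S c ∧
      ((F.1 c i = u ∧ F.1 c (nx i) = v) ∨ (F.1 c i = v ∧ F.1 c (nx i) = u)) := by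
  constructor
  · intro hA
    obtain ⟨c, i, hc⟩ := h u v hA
    refine ⟨c, i, ?_, hc⟩
    rw [mem_gap, not_not]
    rcases hc with ⟨h1, h2⟩ | ⟨h1, h2⟩
    · rw [h1]; rw [show F.1 c (nx i) = v from h2]; exact hA
    · rw [h1]; rw [show F.1 c (nx i) = u from h2]; exact hA.symm
  · rintro ⟨c, i, hi, hc⟩
    rw [mem_gap, not_not] at hi
    rcases hc with ⟨h1, h2⟩ | ⟨h1, h2⟩
    · rwa [h1, h2] at hi
    · rw [h1, h2] at hi; exact hi.symm

theorem gap_det {n k : ℕ} (F : RODFactor n k) (S S' : SimpleGraph (Fin n)) (h : RODContains F S)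
    (h' : RODContains F S') (hg : gap F S = gap F S') : S = S' := by
  ext u v
  rw [adj_iff F S h, adj_iff F S' h', hg]

/-- neighbours of `F c i`. -/
theorem adj_F {n k : ℕ} (F : RODFactor n k) (S : SimpleGraph (Fin n)) (h : RODContains F S)
    (c : Fin (n / k)) (i : Fin k) (v : Fin n) (hA : S.Adj (F.1 c i) v) :
    (i ∉ gap F S c ∧ v = F.1 c (nx i)) ∨ (∃ j, nx j = i ∧ j ∉ gap F S c ∧ v = F.1 c j) := by
  obtain ⟨c', j, hj, hc⟩ := (adj_iff F S h _ _).mp hA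
  rcases hc with ⟨h1, h2⟩ | ⟨h1, h2⟩
  · obtain ⟨rfl, rfl⟩ := F_inj F h1
    exact Or.inl ⟨hj, h2.symm⟩
  · obtain ⟨rfl, rfl⟩ := F_inj F h2
    exact Or.inr ⟨j, rfl, hj, h1.symm⟩

theorem exists_nbr {n m : ℕ} (S : SimpleGraph (Fin n)) (hS : PathsGraph S m) (u : Fin n) :
    ∃ v, S.Adj u v := by
  obtain ⟨ℓ, v, h2, hinj, hrange, hadj⟩ := hS.2 (S.connectedComponentMk u)
  obtain ⟨a, rfl⟩ : u ∈ Set.range v := by rw [hrange]; rfl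
  have := a.2
  by_cases ha : (a : ℕ) + 1 < ℓ
  · exact ⟨v ⟨a + 1, ha⟩, (hadj _ _).mpr (Or.inl rfl)⟩
  · exact ⟨v ⟨a - 1, by omega⟩, (hadj _ _).mpr (Or.inr (by simp; omega))⟩

theorem gap_nonadj {n k m : ℕ} (F : RODFactor n k) (S : SimpleGraph (Fin n)) (h : RODContains F S)
    (hS : PathsGraph S m) (c : Fin (n / k)) (i : Fin k) (hi : i ∈ gap F S c) :
    nx i ∉ gap F S c := by
  intro hi'
  obtain ⟨v, hv⟩ := exists_nbr S hS (F.1 c (nx i))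
  rcases adj_F F S h c (nx i) v hv with ⟨h1, _⟩ | ⟨j, hj, h2, _⟩
  · exact h1 hi'
  · exact h2 (nx_inj hj ▸ hi)

theorem reach_cycle {n k : ℕ} (F : RODFactor n k) (S : SimpleGraph (Fin n)) (h : RODContains F S)
    (u v : Fin n) (hr : S.Reachable u v) (c : Fin (n / k)) (hu : ∃ i, F.1 c i = u) :
    ∃ i, F.1 c i = v := by
  obtain ⟨p⟩ := hr
  induction p with
  | nil => exact hu
  | cons hab p ih =>
    apply ih
    obtain ⟨i, rfl⟩ := hu
    rcases adj_F F S h c i _ hab with ⟨_, h1⟩ | ⟨j, _, _, h1⟩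
    · exact ⟨_, h1.symm⟩
    · exact ⟨_, h1.symm⟩

theorem gap_nonempty {n k m : ℕ} (hk : 3 ≤ k) (F : RODFactor n k) (S : SimpleGraph (Fin n))
    (h : RODContains F S) (hS : PathsGraph S m) (c : Fin (n / k)) : (gap F S c).Nonempty := by
  by_contra hne
  rw [Finset.not_nonempty_iff_eq_empty] at hne
  have hall : ∀ i, S.Adj (F.1 c i) (F.1 c (nx i)) := by
    intro i
    have : i ∉ gap F S c := by rw [hne]; simp
    rwa [mem_gap, not_not] at this
  obtain ⟨ℓ, v, h2, hinj, hrange, hadj⟩ := hS.2 (S.connectedComponentMk (F.1 c ⟨0, by omega⟩))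
  have hv : ∀ u, S.Reachable (F.1 c ⟨0, by omega⟩) u ↔ ∃ x, v x = u := by
    intro u
    have : u ∈ Set.range v ↔ u ∈ (S.connectedComponentMk (F.1 c ⟨0, by omega⟩)).supp := by
      rw [hrange]
    rw [SimpleGraph.ConnectedComponent.mem_supp_iff, SimpleGraph.ConnectedComponent.eq] at this
    exact ⟨fun h => this.mpr h.symm, fun h => (this.mp h).symm⟩
  have h0 := (hv (v ⟨0, by omega⟩)).mpr ⟨_, rfl⟩
  obtain ⟨i, hi⟩ := reach_cycle F S h _ _ h0 c ⟨_, rfl⟩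
  obtain ⟨j, hj⟩ := nx_surj i
  have a1 := hall i
  have a2 := (hall j).symm
  rw [hj] at a2
  rw [hi] at a1 a2
  obtain ⟨x, hx⟩ := (hv _).mp (h0.trans a1.reachable)
  obtain ⟨y, hy⟩ := (hv _).mp (h0.trans a2.reachable)
  rw [← hx, hadj] at a1
  rw [← hy, hadj] at a2
  have hxy : x = y := Fin.ext (by simp at a1 a2; omega)
  have := (F_inj F (hx.symm.trans ((congrArg v hxy).trans hy))).2
  have e1 := nx_val i
  have e2 := nx_val j
  rw [this] at e1
  rw [hj] at e2
  have := j.2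
  have := i.2
  split_ifs at e1 e2 <;> omega

theorem gap_card {n k m : ℕ} (hk : 3 ≤ k) (F : RODFactor n k) (S : SimpleGraph (Fin n))
    (h : RODContains F S) (hS : PathsGraph S m) : m ≤ ∑ c, (gap F S c).card := by
  classical
  have key : ∀ C : S.ConnectedComponent, ∃ p : Σ _ : Fin (n / k), Fin k,
      p.2 ∈ gap F S p.1 ∧ S.connectedComponentMk (F.1 p.1 p.2) = C := by
    intro C
    by_contra hcon
    push Not at hcon
    induction C using SimpleGraph.ConnectedComponent.ind with
    | h u =>
    obtain ⟨c, i, rfl⟩ := F_surj F u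
    have hall : ∀ t : ℕ, S.connectedComponentMk (F.1 c (nx^[t] i)) =
        S.connectedComponentMk (F.1 c i) := by
      intro t
      induction t with
      | zero => rfl
      | succ t ih =>
        rw [Function.iterate_succ_apply', ← ih]
        have hg : nx^[t] i ∉ gap F S c := fun hg => hcon ⟨c, _⟩ hg ih
        rw [mem_gap, not_not] at hg
        exact SimpleGraph.ConnectedComponent.sound hg.symm.reachable
    obtain ⟨g, hg⟩ := gap_nonempty hk F S h hS c
    have hit : ∀ t : ℕ, ((nx^[t] i : Fin k) : ℕ) = (i + t) % k := by
      intro t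
      induction t with
      | zero => simp [Nat.mod_eq_of_lt i.2]
      | succ t ih =>
        rw [Function.iterate_succ_apply']
        simp only [nx, ih]
        rw [Nat.mod_add_mod, add_assoc]
    have : nx^[g + k - i] i = g := by
      apply Fin.ext
      rw [hit]
      have := i.2
      rw [show (i : ℕ) + (g + k - i) = g + k by omega, Nat.add_mod_right, Nat.mod_eq_of_lt g.2]
    exact hcon ⟨c, g⟩ hg (by have := hall (g + k - i); rwa [‹nx^[g + k - i] i = g›] at this)
  choose f hf1 hf2 using key
  have finj : Function.Injective f := by
    intro C C' hC
    rw [← hf2 C, ← hf2 C', hC]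
  rw [← hS.1, Nat.card_eq_fintype_card, ← Finset.card_sigma]
  apply Finset.card_le_card_of_injOn f
  · intro C _
    simp only [Finset.coe_sigma, Set.mem_sigma_iff, Finset.coe_univ, Set.mem_univ, true_and,
      Finset.mem_coe]
    exact hf1 C
  · exact fun a _ b _ hab => finj hab

/-- Offset of `i` in the rotation of the cycle that ends at `g`. -/
def off (k g i : ℕ) : ℕ := if g < i then i - g - 1 else i + k - 1 - g

instance (n k : ℕ) : Finite (RODFactor n k) := by unfold RODFactor; infer_instance

theorem card_rod_gap {n k m : ℕ} (hkn : k ∣ n) (hk : 3 ≤ k) (S : SimpleGraph (Fin n))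
    (hS : PathsGraph S m) :
    Nat.card (Σ F : {F : RODFactor n k // RODContains F S},
      ((c : Fin (n / k)) → {i : Fin k // i ∈ gap F.1 S c})) ≤
      k ^ (n / k) * (m.factorial * 2 ^ m) := by
  classical
  refine le_trans ?_ (Nat.mul_le_mul le_rfl (cardPos S hS))
  have hnk : n / k * k = n := Nat.div_mul_cancel hkn
  let e : ∀ F : RODFactor n k, Fin (n / k) × Fin k ≃ Fin n := fun F => Equiv.ofBijective _ F.2
  have he : ∀ F c i, e F (c, i) = F.1 c i := fun F c i => rfl
  have hes : ∀ F c i, (e F).symm (F.1 c i) = (c, i) := fun F c i => by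
    rw [← he, Equiv.symm_apply_apply]
  let X := (Σ F : {F : RODFactor n k // RODContains F S},
      ((c : Fin (n / k)) → {i : Fin k // i ∈ gap F.1 S c}))
  let pos : X → Fin n → ℕ := fun x u =>
    (((e x.1.1).symm u).1 : ℕ) * k + off k (x.2 ((e x.1.1).symm u).1).1 ((e x.1.1).symm u).2
  have hoff : ∀ g i : Fin k, off k g i < k := by
    intro g i
    have := g.2
    have := i.2
    unfold off; split_ifs <;> omega
  have hoffi : ∀ g i j : Fin k, off k g i = off k g j → i = j := by
    intro g i j h
    have := g.2
    have := i.2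
    have := j.2
    unfold off at h
    apply Fin.ext
    split_ifs at h <;> omega
  have hpos : ∀ x u, pos x u < n := by
    intro x u
    have h1 := hoff (x.2 ((e x.1.1).symm u).1).1 ((e x.1.1).symm u).2
    have h2 := ((e x.1.1).symm u).1.2
    calc pos x u < ((e x.1.1).symm u).1 * k + k := by simp only [pos]; omega
      _ = (((e x.1.1).symm u).1 + 1) * k := by ring
      _ ≤ n / k * k := Nat.mul_le_mul h2 le_rfl
      _ = n := hnk
  have hposF : ∀ x c i, pos x (x.1.1.1 c i) = c * k + off k (x.2 c).1 i := by
    intro x c i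
    exact congrArg (fun z : Fin (n / k) × Fin k => (z.1 : ℕ) * k + off k (x.2 z.1).1 z.2)
      (hes x.1.1 c i)
  have split : ∀ c c' o o' : ℕ, o < k → o' < k → c * k + o = c' * k + o' → c = c' ∧ o = o' := by
    intro c c' o o' h1 h2 h
    have q1 : (c * k + o) / k = c := by
      rw [add_comm, Nat.add_mul_div_right _ _ (by omega), Nat.div_eq_of_lt h1, zero_add]
    have q2 : (c' * k + o') / k = c' := by
      rw [add_comm, Nat.add_mul_div_right _ _ (by omega), Nat.div_eq_of_lt h2, zero_add]
    have : c = c' := by rw [← q1, ← q2, h]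
    subst this
    exact ⟨rfl, by omega⟩
  let Y := {φ : Fin n → Fin n // Function.Injective φ ∧
      ∀ u v, S.Adj u v → (φ u : ℕ) + 1 = φ v ∨ (φ v : ℕ) + 1 = φ u}
  have hstep : ∀ (x : X) c i, i ∉ gap x.1.1 S c →
      pos x (x.1.1.1 c i) + 1 = pos x (x.1.1.1 c (nx i)) := by
    intro x c i hi
    rw [hposF, hposF]
    have hne : (x.2 c).1 ≠ i := fun h => hi (h ▸ (x.2 c).2)
    have hne' : ((x.2 c).1 : ℕ) ≠ i := fun h => hne (Fin.ext h)
    have := (x.2 c).1.2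
    have := i.2
    have e1 := nx_val i
    rw [add_assoc]
    congr 1
    unfold off
    rw [e1]
    split_ifs <;> omega
  let enc : X → (Fin (n / k) → Fin k) × Y := fun x =>
    (fun c => (x.2 c).1, ⟨fun u => ⟨pos x u, hpos x u⟩, by
      constructor
      · intro u v huv
        obtain ⟨c, i, rfl⟩ := F_surj x.1.1 u
        obtain ⟨c', i', rfl⟩ := F_surj x.1.1 v
        have huv := congrArg Fin.val huv
        simp only [hposF] at huv
        obtain ⟨h1, h2⟩ := split _ _ _ _ (hoff _ _) (hoff _ _) huv
        have h1 := Fin.ext h1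
        subst h1
        rw [hoffi _ _ _ h2]
      · intro u v huv
        obtain ⟨c, i, hi, hc⟩ := (adj_iff x.1.1 S x.1.2 u v).mp huv
        have := hstep x c i hi
        rcases hc with ⟨rfl, rfl⟩ | ⟨rfl, rfl⟩
        · exact Or.inl this
        · exact Or.inr this⟩)
  have enc_inj : Function.Injective enc := by
    intro x y hxy
    have hg : ∀ c, (x.2 c).1 = (y.2 c).1 := fun c => congrFun (congrArg Prod.fst hxy) c
    have hp : ∀ u, pos x u = pos y u := by
      intro u
      have := congrArg (fun z => ((z.2.1 u : Fin n) : ℕ)) hxy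
      simpa [enc] using this
    have hF : x.1.1 = y.1.1 := by
      apply Subtype.ext
      funext c i
      obtain ⟨c', i', h'⟩ := F_surj y.1.1 (x.1.1.1 c i)
      have := hp (x.1.1.1 c i)
      rw [hposF, ← h', hposF] at this
      obtain ⟨h1, h2⟩ := split _ _ _ _ (hoff _ _) (hoff _ _) this
      have h1 := Fin.ext h1
      subst h1
      rw [hg] at h2
      rw [← h', hoffi _ _ _ h2]
    obtain ⟨⟨F, hF1⟩, g⟩ := x
    obtain ⟨⟨F', hF1'⟩, g'⟩ := y
    simp only at hF
    subst hF
    congr 1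
    funext c
    exact Subtype.ext (hg c)
  have := Nat.card_le_card_of_injective enc enc_inj
  refine this.trans (le_of_eq ?_)
  rw [Nat.card_prod, Nat.card_eq_fintype_card, Fintype.card_fun, Fintype.card_fin, Fintype.card_fin]

theorem sum_prod_gap {n k m : ℕ} (hkn : k ∣ n) (hk : 3 ≤ k) (S : SimpleGraph (Fin n))
    (hS : PathsGraph S m) [Fintype {F : RODFactor n k // RODContains F S}] :
    ∑ F : {F : RODFactor n k // RODContains F S}, ∏ c, (gap F.1 S c).card ≤
      k ^ (n / k) * (m.factorial * 2 ^ m) := by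
  classical
  refine le_trans (le_of_eq ?_) (card_rod_gap hkn hk S hS)
  rw [Nat.card_sigma]
  apply Finset.sum_congr rfl
  intro F _
  rw [Nat.card_pi]
  apply Finset.prod_congr rfl
  intro c _
  simp

theorem hoelder_card {ι : Type*} (s : Finset ι) (w : ι → ℝ) (hw : ∀ i ∈ s, 0 < w i) (Z : ℝ)
    (hZ : ∑ i ∈ s, w i ≤ Z) (p : ℕ) :
    (s.card : ℝ) ^ (p + 1) ≤ Z ^ p * ∑ i ∈ s, (1 / w i) ^ p := by
  rcases s.eq_empty_or_nonempty with rfl | hne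
  · simp
  set T := ∑ i ∈ s, w i with hT
  have hT0 : 0 < T := Finset.sum_pos hw hne
  have key := Real.pow_arith_mean_le_arith_mean_pow s (fun i => w i / T) (fun i => 1 / w i)
    (fun i hi => (div_pos (hw i hi) hT0).le) (by rw [← Finset.sum_div, div_self hT0.ne'])
    (fun i hi => (one_div_pos.mpr (hw i hi)).le) (p + 1)
  have e1 : ∑ i ∈ s, w i / T * (1 / w i) = s.card / T := by
    rw [Finset.sum_congr rfl (g := fun _ => 1 / T)]
    · rw [Finset.sum_const, nsmul_eq_mul, mul_one_div]
    · intro i hi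
      have := (hw i hi).ne'
      field_simp
  have e2 : ∑ i ∈ s, w i / T * (1 / w i) ^ (p + 1) = (∑ i ∈ s, (1 / w i) ^ p) / T := by
    rw [Finset.sum_div]
    apply Finset.sum_congr rfl
    intro i hi
    have := (hw i hi).ne'
    rw [pow_succ]
    field_simp
  rw [e1, e2, div_pow] at key
  have hs : 0 ≤ ∑ i ∈ s, (1 / w i) ^ p :=
    Finset.sum_nonneg (fun i hi => pow_nonneg (one_div_pos.mpr (hw i hi)).le _)
  calc (s.card : ℝ) ^ (p + 1) = (s.card : ℝ) ^ (p + 1) / T ^ (p + 1) * T ^ (p + 1) := by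
        rw [div_mul_cancel₀]; positivity
    _ ≤ (∑ i ∈ s, (1 / w i) ^ p) / T * T ^ (p + 1) := by gcongr
    _ = T ^ p * ∑ i ∈ s, (1 / w i) ^ p := by rw [pow_succ]; field_simp
    _ ≤ Z ^ p * ∑ i ∈ s, (1 / w i) ^ p := by gcongr

theorem NS_pow {n k m : ℕ} (hkn : k ∣ n) (hk : 3 ≤ k) (S : SimpleGraph (Fin n))
    (hS : PathsGraph S m) [Fintype {F : RODFactor n k // RODContains F S}] (p : ℕ) :
    (NS k S : ℝ) ^ (p + 1) ≤ ((m.factorial : ℝ) * 2 ^ m) ^ p *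
      ∑ F : {F : RODFactor n k // RODContains F S}, ∏ c, ((k : ℝ) / (gap F.1 S c).card) ^ p := by
  have hk0 : (0 : ℝ) < k := by exact_mod_cast (by omega : 0 < k)
  have hg : ∀ (F : {F : RODFactor n k // RODContains F S}) c, (0 : ℝ) < (gap F.1 S c).card := by
    intro F c
    exact_mod_cast Finset.card_pos.mpr (gap_nonempty hk F.1 S F.2 hS c)
  have := hoelder_card (Finset.univ : Finset {F : RODFactor n k // RODContains F S})
    (fun F => ∏ c, ((gap F.1 S c).card / (k : ℝ)))
    (fun F _ => Finset.prod_pos (fun c _ => div_pos (hg F c) hk0)) ((m.factorial : ℝ) * 2 ^ m)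
    (by
      have h := sum_prod_gap hkn hk S hS
      have h' : ((∑ F : {F : RODFactor n k // RODContains F S}, ∏ c, (gap F.1 S c).card : ℕ) : ℝ) ≤
        ((k ^ (n / k) * (m.factorial * 2 ^ m) : ℕ) : ℝ) := by exact_mod_cast h
      push_cast at h'
      simp only [Finset.prod_div_distrib, ← Finset.sum_div, Finset.prod_const, Finset.card_univ,
        Fintype.card_fin]
      rw [div_le_iff₀ (by positivity)]
      linarith) p
  rw [Finset.card_univ, ← Nat.card_eq_fintype_card] at this
  refine this.trans (le_of_eq ?_)
  congr 1
  apply Finset.sum_congr rfl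
  intro F _
  rw [Finset.prod_pow]
  congr 1
  rw [one_div, ← Finset.prod_inv_distrib]
  simp

open Classical in
/-- Nonempty subsets of the cyclic group without two adjacent elements. -/
noncomputable def Bs (k : ℕ) : Finset (Finset (Fin k)) :=
  Finset.univ.filter (fun b => b.Nonempty ∧ ∀ i ∈ b, nx i ∉ b)

/-- Weighted count of the gap sets in one cycle. -/
noncomputable def Wt (k p : ℕ) (x : ℝ) : ℝ :=
  ∑ b ∈ Bs k, x ^ b.card * ((k : ℝ) / b.card) ^ p

open Classical in
theorem sum_fixed_F {n k m : ℕ} (hk : 3 ≤ k) (F : RODFactor n k) (p : ℕ) (x : ℝ) (hx : 1 ≤ x) :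
    ∑ S ∈ (Finset.univ : Finset (SimpleGraph (Fin n))).filter
      (fun S => PathsGraph S m ∧ RODContains F S), ∏ c, ((k : ℝ) / (gap F S c).card) ^ p ≤
    (x ^ m)⁻¹ * Wt k p x ^ (n / k) := by
  have hx0 : 0 < x := by linarith
  have e1 : Wt k p x ^ (n / k) = ∑ β ∈ Fintype.piFinset (fun _ : Fin (n / k) => Bs k),
      ∏ c, (x ^ (β c).card * ((k : ℝ) / (β c).card) ^ p) := by
    have := Finset.prod_univ_sum (fun _ : Fin (n / k) => Bs k)
      (fun _ b => x ^ b.card * ((k : ℝ) / b.card) ^ p)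
    rw [← this]
    simp [Wt]
  have e2 : ∑ S ∈ (Finset.univ : Finset (SimpleGraph (Fin n))).filter
      (fun S => PathsGraph S m ∧ RODContains F S),
        ∏ c, (x ^ (gap F S c).card * ((k : ℝ) / (gap F S c).card) ^ p) ≤ Wt k p x ^ (n / k) := by
    rw [e1]
    rw [← Finset.sum_image (f := fun β : Fin (n / k) → Finset (Fin k) =>
      ∏ c, (x ^ (β c).card * ((k : ℝ) / (β c).card) ^ p)) (g := fun S => gap F S)]
    · apply Finset.sum_le_sum_of_subset_of_nonneg
      · intro β hβ
        obtain ⟨S, hS, rfl⟩ := Finset.mem_image.mp hβ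
        simp only [Finset.mem_filter, Finset.mem_univ, true_and] at hS
        rw [Fintype.mem_piFinset]
        intro c
        simp only [Bs, Finset.mem_filter, Finset.mem_univ, true_and]
        exact ⟨gap_nonempty hk F S hS.2 hS.1 c, gap_nonadj F S hS.2 hS.1 c⟩
      · intro β _ _
        positivity
    · intro S hS S' hS' h
      simp only [Finset.coe_filter, Finset.mem_univ, true_and, Set.mem_ofPred_eq] at hS hS'
      exact gap_det F S S' hS.2 hS'.2 h
  rw [inv_mul_eq_div, le_div_iff₀ (by positivity)]
  refine le_trans ?_ e2
  rw [Finset.sum_mul]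
  apply Finset.sum_le_sum
  intro S hS
  simp only [Finset.mem_filter, Finset.mem_univ, true_and] at hS
  rw [Finset.prod_mul_distrib, Finset.prod_pow_eq_pow_sum, mul_comm]
  gcongr
  exact gap_card hk F S hS.2 hS.1

theorem card_rod {n k : ℕ} (hkn : k ∣ n) : Nat.card (RODFactor n k) = n.factorial := by
  classical
  have e : RODFactor n k ≃ (Fin (n / k) × Fin k ≃ Fin n) :=
    { toFun := fun F => Equiv.ofBijective _ F.2
      invFun := fun e => ⟨fun c i => e (c, i), e.bijective⟩
      left_inv := fun F => rfl
      right_inv := fun e => by ext; rfl }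
  have hc : Fintype.card (Fin (n / k) × Fin k) = n := by
    simp [Nat.div_mul_cancel hkn]
  rw [Nat.card_congr e, Nat.card_eq_fintype_card,
    Fintype.card_equiv (Fintype.equivFinOfCardEq hc), hc]

open Classical in
theorem sum_NS_pow {n k m : ℕ} (hkn : k ∣ n) (hk : 3 ≤ k) (p : ℕ) (x : ℝ) (hx : 1 ≤ x) :
    ∑ S ∈ (Finset.univ : Finset (SimpleGraph (Fin n))).filter (fun S => PathsGraph S m),
      (NS k S : ℝ) ^ (p + 1) ≤
    ((m.factorial : ℝ) * 2 ^ m) ^ p * (n.factorial * ((x ^ m)⁻¹ * Wt k p x ^ (n / k))) := by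
  have : Fintype (RODFactor n k) := Fintype.ofFinite _
  calc _ ≤ ∑ S ∈ (Finset.univ : Finset (SimpleGraph (Fin n))).filter (fun S => PathsGraph S m),
        ((m.factorial : ℝ) * 2 ^ m) ^ p *
        ∑ F : RODFactor n k, if RODContains F S then ∏ c, ((k : ℝ) / (gap F S c).card) ^ p else 0 := by
        apply Finset.sum_le_sum
        intro S hS
        refine (NS_pow hkn hk S (Finset.mem_filter.mp hS).2 p).trans (le_of_eq ?_)
        congr 1
        rw [← Finset.sum_filter, ← Finset.sum_subtype_eq_sum_filter]
        apply Finset.sum_congr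
        · ext; simp
        · intros; rfl
    _ = ((m.factorial : ℝ) * 2 ^ m) ^ p * ∑ F : RODFactor n k,
        ∑ S ∈ (Finset.univ : Finset (SimpleGraph (Fin n))).filter
          (fun S => PathsGraph S m ∧ RODContains F S), ∏ c, ((k : ℝ) / (gap F S c).card) ^ p := by
        rw [← Finset.mul_sum, Finset.sum_comm]
        congr 1
        apply Finset.sum_congr rfl
        intro F _
        rw [← Finset.sum_filter, Finset.filter_filter]
    _ ≤ ((m.factorial : ℝ) * 2 ^ m) ^ p * ∑ F : RODFactor n k,
        ((x ^ m)⁻¹ * Wt k p x ^ (n / k)) := by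
        gcongr with F _
        exact sum_fixed_F hk F p x hx
    _ = _ := by
        rw [Finset.sum_const, Finset.card_univ, ← Nat.card_eq_fintype_card, card_rod hkn,
          nsmul_eq_mul]

open Classical in
/-- Weighted count of the subsets of `{0,…,k-1}` without two consecutive elements. -/
noncomputable def linSum (y : ℝ) (k : ℕ) : ℝ :=
  ∑ b ∈ (Finset.range k).powerset, if (∀ i ∈ b, i + 1 ∉ b) then y ^ b.card else 0

theorem linSum_step (y : ℝ) (hy : 0 ≤ y) (k : ℕ) :
    linSum y (k + 2) ≤ linSum y (k + 1) + y * linSum y k := by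
  classical
  unfold linSum
  rw [show Finset.range (k + 2) = insert (k + 1) (Finset.range (k + 1)) from Finset.range_add_one]
  rw [Finset.sum_powerset_insert (by simp)]
  gcongr
  rw [show Finset.range (k + 1) = insert k (Finset.range k) from Finset.range_add_one]
  rw [Finset.sum_powerset_insert (by simp), Finset.mul_sum]
  have h2 : ∑ t ∈ (Finset.range k).powerset,
      (if (∀ i ∈ insert (k + 1) (insert k t), i + 1 ∉ insert (k + 1) (insert k t)) then
        y ^ (insert (k + 1) (insert k t)).card else 0) = 0 := by
    apply Finset.sum_eq_zero
    intro t _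
    rw [if_neg]
    intro h
    exact h k (by simp) (by simp)
  rw [h2, add_zero]
  apply Finset.sum_le_sum
  intro b hb
  have hk1 : k + 1 ∉ b := fun h => by
    have := Finset.mem_range.mp (Finset.mem_powerset.mp hb h)
    omega
  by_cases h : ∀ i ∈ insert (k + 1) b, i + 1 ∉ insert (k + 1) b
  · rw [if_pos h, if_pos, Finset.card_insert_of_notMem hk1, pow_succ, mul_comm]
    intro i hi hi'
    exact h i (Finset.mem_insert_of_mem hi) (Finset.mem_insert_of_mem hi')
  · rw [if_neg h]
    split_ifs <;> positivity

theorem linSum_le (lam : ℝ) (hl : 1 ≤ lam) (k : ℕ) : linSum (lam ^ 2 - lam) k ≤ lam ^ (k + 1) := by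
  have hy : 0 ≤ lam ^ 2 - lam := by nlinarith
  induction k using Nat.strong_induction_on with
  | _ k ih =>
  match k with
  | 0 => simpa [linSum] using hl
  | 1 =>
    have : linSum (lam ^ 2 - lam) 1 = 1 + (lam ^ 2 - lam) := by
      unfold linSum
      rw [show Finset.range 1 = insert 0 ∅ from rfl, Finset.sum_powerset_insert (by simp)]
      simp
    rw [this]
    norm_num
    linarith
  | k + 2 =>
    refine (linSum_step _ hy k).trans ?_
    have h1 := ih (k + 1) (by omega)
    have h2 := ih k (by omega)
    calc _ ≤ lam ^ (k + 1 + 1) + (lam ^ 2 - lam) * lam ^ (k + 1) := by gcongr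
      _ = _ := by ring

theorem Bs_sum_le (lam : ℝ) (hl : 1 ≤ lam) (k : ℕ) :
    ∑ b ∈ Bs k, (lam ^ 2 - lam) ^ b.card ≤ lam ^ (k + 1) := by
  classical
  refine le_trans ?_ (linSum_le lam hl k)
  have hy : 0 ≤ lam ^ 2 - lam := by nlinarith
  unfold linSum
  rw [← Finset.sum_filter]
  have e : ∑ b ∈ Bs k, (lam ^ 2 - lam) ^ b.card =
      ∑ b ∈ (Bs k).image (fun b => b.map Fin.valEmbedding), (lam ^ 2 - lam) ^ b.card := by
    rw [Finset.sum_image]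
    · simp
    · intro a _ b _ h
      exact Finset.map_injective _ h
  rw [e]
  apply Finset.sum_le_sum_of_subset_of_nonneg
  · intro b' hb'
    obtain ⟨b, hb, rfl⟩ := Finset.mem_image.mp hb'
    simp only [Bs, Finset.mem_filter, Finset.mem_univ, true_and] at hb
    simp only [Finset.mem_filter, Finset.mem_powerset]
    constructor
    · intro i hi
      obtain ⟨j, _, rfl⟩ := Finset.mem_map.mp hi
      simp
    · intro i hi hi'
      obtain ⟨j, hj, rfl⟩ := Finset.mem_map.mp hi
      obtain ⟨j', hj', h⟩ := Finset.mem_map.mp hi'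
      simp only [Fin.valEmbedding_apply] at h
      have : nx j = j' := by
        apply Fin.ext
        rw [nx_val, h, if_neg]
        have := j'.2
        omega
      exact hb.2 j hj (this ▸ hj')
  · intro b _ _
    positivity

theorem Wt_le (lam : ℝ) (h1 : 1.8 ≤ lam) (h2 : lam ≤ 2.2) (k p : ℕ) (hk : 1 ≤ k)
    (hp : (k : ℝ) ^ p ≤ 1.3 ^ k) : Wt k p (lam ^ 2 - lam) ≤ 2 * 20 ^ p * lam ^ (k + 1) := by
  have hx : 0 < lam ^ 2 - lam := by nlinarith
  have hk0 : (0 : ℝ) < k := by exact_mod_cast hk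
  have hx' : lam ^ 2 - lam ≤ 11 * (1.2 ^ 2 - 1.2) := by nlinarith
  have term : ∀ b ∈ Bs k, (lam ^ 2 - lam) ^ b.card * ((k : ℝ) / b.card) ^ p ≤
      20 ^ p * (lam ^ 2 - lam) ^ b.card + 1.3 ^ k * 1.13 ^ k * (1.2 ^ 2 - 1.2) ^ b.card := by
    intro b hb
    have hb1 : 1 ≤ b.card := by
      simp only [Bs, Finset.mem_filter, Finset.mem_univ, true_and] at hb
      exact Finset.card_pos.mpr hb.1
    have hb0 : (1 : ℝ) ≤ b.card := by exact_mod_cast hb1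
    have hbp : (0 : ℝ) < b.card := by linarith
    by_cases hc : k ≤ 20 * b.card
    · have : (k : ℝ) / b.card ≤ 20 := by
        rw [div_le_iff₀ hbp]; exact_mod_cast hc
      have h3 : (lam ^ 2 - lam) ^ b.card * ((k : ℝ) / b.card) ^ p ≤
          (lam ^ 2 - lam) ^ b.card * 20 ^ p := by gcongr
      have h4 : (0 : ℝ) ≤ 1.3 ^ k * 1.13 ^ k * (1.2 ^ 2 - 1.2) ^ b.card := by
        apply mul_nonneg (by positivity)
        exact pow_nonneg (by norm_num) _
      linarith
    · have hc : 20 * b.card ≤ k := by omega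
      have h3 : ((k : ℝ) / b.card) ^ p ≤ 1.3 ^ k := by
        refine le_trans ?_ hp
        gcongr
        exact div_le_self hk0.le hb0
      have h4 : (lam ^ 2 - lam) ^ b.card ≤ 1.13 ^ k * (1.2 ^ 2 - 1.2) ^ b.card := by
        calc (lam ^ 2 - lam) ^ b.card ≤ (11 * (1.2 ^ 2 - 1.2)) ^ b.card := by gcongr
          _ = 11 ^ b.card * (1.2 ^ 2 - 1.2) ^ b.card := by rw [mul_pow]
          _ ≤ 1.13 ^ k * (1.2 ^ 2 - 1.2) ^ b.card := by
            apply mul_le_mul_of_nonneg_right _ (pow_nonneg (by norm_num) _)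
            calc (11 : ℝ) ^ b.card ≤ (1.13 ^ 20) ^ b.card := by gcongr; norm_num
              _ = 1.13 ^ (20 * b.card) := by rw [pow_mul]
              _ ≤ 1.13 ^ k := by gcongr; norm_num
      have h5 : (lam ^ 2 - lam) ^ b.card * ((k : ℝ) / b.card) ^ p ≤
          (1.13 ^ k * (1.2 ^ 2 - 1.2) ^ b.card) * 1.3 ^ k :=
        mul_le_mul h4 h3 (by positivity) (mul_nonneg (by positivity) (pow_nonneg (by norm_num) _))
      have h6 : 0 ≤ 20 ^ p * (lam ^ 2 - lam) ^ b.card := by positivity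
      linarith
  unfold Wt
  refine (Finset.sum_le_sum term).trans ?_
  rw [Finset.sum_add_distrib, ← Finset.mul_sum, ← Finset.mul_sum]
  have s1 := Bs_sum_le lam (by linarith) k
  have s2 := Bs_sum_le 1.2 (by norm_num) k
  have h20 : (1 : ℝ) ≤ 20 ^ p := one_le_pow₀ (by norm_num)
  have t2 : 1.3 ^ k * 1.13 ^ k * ∑ b ∈ Bs k, ((1.2 : ℝ) ^ 2 - 1.2) ^ b.card ≤ lam ^ (k + 1) := by
    calc _ ≤ 1.3 ^ k * 1.13 ^ k * (1.2 : ℝ) ^ (k + 1) := by gcongr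
      _ = (1.3 * 1.13 * 1.2) ^ k * 1.2 := by rw [mul_pow, mul_pow]; ring
      _ ≤ lam ^ k * lam := by
        gcongr
        · linarith
        · linarith
      _ = _ := by ring
  have hlp : (0 : ℝ) < lam ^ (k + 1) := by positivity
  calc _ ≤ 20 ^ p * lam ^ (k + 1) + lam ^ (k + 1) := by gcongr
    _ ≤ _ := by nlinarith

theorem fact_pow (j m : ℕ) : m.factorial * m ^ j ≤ j.factorial * m ^ m := by
  rcases le_total m j with h | h
  · have := Nat.factorial_mul_pow_sub_le_factorial h
    calc m.factorial * m ^ j = (m.factorial * m ^ (j - m)) * m ^ m := by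
          rw [mul_assoc, ← pow_add, Nat.sub_add_cancel h]
      _ ≤ _ := Nat.mul_le_mul this le_rfl
  · have : m.factorial ≤ j.factorial * m ^ (m - j) := by
      obtain ⟨d, rfl⟩ := Nat.exists_eq_add_of_le h
      rw [Nat.add_sub_cancel_left]
      have h1 := Nat.factorial_mul_descFactorial (Nat.le_add_left d j)
      rw [Nat.add_sub_cancel] at h1
      rw [← h1]
      exact Nat.mul_le_mul le_rfl (Nat.descFactorial_le_pow _ _)
    calc m.factorial * m ^ j ≤ (j.factorial * m ^ (m - j)) * m ^ j := Nat.mul_le_mul this le_rfl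
      _ = _ := by rw [mul_assoc, ← pow_add, Nat.sub_add_cancel h]

theorem binom_mode (m t : ℕ) :
    (m + t) ^ (m + t) ≤ (m + t + 1) * ((m + t).choose m * m ^ m * t ^ t) := by
  rw [add_pow]
  refine (Finset.sum_le_card_nsmul _ _ ((m + t).choose m * m ^ m * t ^ t) ?_).trans ?_
  · intro j hj
    have hj : j ≤ m + t := by simpa [Nat.lt_succ_iff] using hj
    obtain ⟨i, hi⟩ := Nat.exists_eq_add_of_le hj
    have e1 : (m + t).choose j * j.factorial * i.factorial = (m + t).factorial := by
      have := Nat.choose_mul_factorial_mul_factorial hj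
      rwa [show m + t - j = i by omega] at this
    have e2 : (m + t).choose m * m.factorial * t.factorial = (m + t).factorial := by
      have := Nat.choose_mul_factorial_mul_factorial (Nat.le_add_right m t)
      rwa [Nat.add_sub_cancel_left] at this
    have f1 := fact_pow j m
    have f2 := fact_pow i t
    rw [show m + t - j = i by omega]
    have hpos : 0 < j.factorial * i.factorial * (m.factorial * t.factorial) := by positivity
    apply Nat.le_of_mul_le_mul_left _ hpos
    calc j.factorial * i.factorial * (m.factorial * t.factorial) *
          (m ^ j * t ^ i * (m + t).choose j)
        = ((m + t).choose j * j.factorial * i.factorial) * ((m.factorial * m ^ j) *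
            (t.factorial * t ^ i)) := by ring
      _ = (m + t).factorial * ((m.factorial * m ^ j) * (t.factorial * t ^ i)) := by rw [e1]
      _ ≤ (m + t).factorial * ((j.factorial * m ^ m) * (i.factorial * t ^ t)) := by gcongr
      _ = ((m + t).choose m * m.factorial * t.factorial) *
            ((j.factorial * m ^ m) * (i.factorial * t ^ t)) := by rw [e2]
      _ = _ := by ring
  · simp

theorem multichoose_lower (m t n : ℕ) (hm : 1 ≤ m) (hn : n = 2 * m + t) :
    (m + t) ^ (m + t) ≤ n ^ 2 * (m.multichoose t * m ^ m * t ^ t) := by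
  refine (binom_mode m t).trans ?_
  have h : m * (m + t).choose m = (m + t) * m.multichoose t := by
    rw [Nat.multichoose_eq]
    obtain ⟨d, rfl⟩ := Nat.exists_eq_add_of_le hm
    have := Nat.add_one_mul_choose_eq (d + t) d
    rw [show 1 + d + t - 1 = d + t by omega, show 1 + d + t = d + t + 1 by ring, add_comm 1 d]
    rw [mul_comm, ← this]
    congr 1
    rw [Nat.choose_symm_add]
  have h3 : (m + t).choose m ≤ (m + t) * m.multichoose t := by
    rw [← h]; exact Nat.le_mul_of_pos_left _ hm
  calc (m + t + 1) * ((m + t).choose m * m ^ m * t ^ t)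
      ≤ (m + t + 1) * (((m + t) * m.multichoose t) * m ^ m * t ^ t) := by gcongr
    _ = ((m + t + 1) * (m + t)) * (m.multichoose t * m ^ m * t ^ t) := by ring
    _ ≤ n ^ 2 * (m.multichoose t * m ^ m * t ^ t) := by
      gcongr
      rw [pow_two]
      apply Nat.mul_le_mul <;> omega

theorem Wt_nonneg' (k p : ℕ) (x : ℝ) (hx : 0 ≤ x) : 0 ≤ Wt k p x := by
  unfold Wt
  exact Finset.sum_nonneg fun b _ => by positivity

open Classical in
theorem moment_bound (n k m p : ℕ) (hkn : k ∣ n) (hk : 3 ≤ k) (hm : 1 ≤ m) (hn : 1 ≤ n)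
    (hp : (k : ℝ) ^ p ≤ 1.3 ^ k) (hθ : |(m : ℝ) / n - 1 / 3| ≤ 1 / 100) :
    ∑ S ∈ (Finset.univ : Finset (SimpleGraph (Fin n))).filter (fun S => PathsGraph S m),
      (NS k S : ℝ) ^ (p + 1) ≤
    ((m.factorial : ℝ) * 2 ^ m) ^ (p + 1) *
      (Nat.card {G : SimpleGraph (Fin n) // PathsGraph G m} : ℝ) *
      ((n : ℝ) ^ 2 * (6 * 20 ^ p) ^ (n / k)) := by
  have hn0 : (0 : ℝ) < n := by exact_mod_cast hn
  have hm0 : (0 : ℝ) < m := by exact_mod_cast hm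
  rw [abs_le] at hθ
  have hlo : (1 / 3 - 1 / 100) * (n : ℝ) ≤ m := by
    rw [← le_div_iff₀ hn0]; linarith [hθ.1]
  have hhi : (m : ℝ) ≤ (1 / 3 + 1 / 100) * n := by
    rw [← div_le_iff₀ hn0]; linarith [hθ.2]
  have h2m : 2 * m < n := by
    have : (2 * m : ℝ) < n := by nlinarith
    exact_mod_cast this
  obtain ⟨t, ht⟩ := Nat.exists_eq_add_of_le h2m.le
  have ht1 : 1 ≤ t := by omega
  have ht0 : (0 : ℝ) < t := by exact_mod_cast ht1
  have hnt : (n : ℝ) = 2 * m + t := by exact_mod_cast ht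
  set lam : ℝ := (m + t) / t with hlam
  have h1 : 1.8 ≤ lam := by
    rw [hlam, le_div_iff₀ ht0]; norm_num; nlinarith
  have h2 : lam ≤ 2.2 := by
    rw [hlam, div_le_iff₀ ht0]; norm_num; nlinarith
  set x : ℝ := lam ^ 2 - lam with hx
  have hx1 : 1 ≤ x := by norm_num at h1; nlinarith
  have hx0 : 0 < x := by linarith
  have hlam0 : 0 < lam := by norm_num at h1; linarith
  have hxe : x = (m + t) * m / t ^ 2 := by
    rw [hx, hlam]; field_simp; ring
  have hr : n = k * (n / k) := (Nat.mul_div_cancel' hkn).symm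
  set r := n / k with hrdef
  refine (sum_NS_pow hkn hk p x hx1).trans ?_
  rw [← hrdef]
  have hW : Wt k p x ^ r ≤ lam ^ n * (6 * 20 ^ p) ^ r := by
    calc Wt k p x ^ r ≤ (2 * 20 ^ p * lam ^ (k + 1)) ^ r :=
          pow_le_pow_left₀ (Wt_nonneg' k p x hx0.le) (Wt_le lam h1 h2 k p (by omega) hp) r
      _ = (lam ^ k * (2 * lam * 20 ^ p)) ^ r := by congr 1; ring
      _ ≤ (lam ^ k * (6 * 20 ^ p)) ^ r := by
        gcongr
        norm_num at h2
        linarith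
      _ = lam ^ n * (6 * 20 ^ p) ^ r := by rw [mul_pow, ← pow_mul, ← hr]
  have hmc : ((m : ℝ) + t) ^ (m + t) ≤ (n : ℝ) ^ 2 * (m.multichoose t * m ^ m * t ^ t) := by
    exact_mod_cast multichoose_lower m t n hm ht
  have hln : lam ^ n ≤ (n : ℝ) ^ 2 * m.multichoose t * x ^ m := by
    have e1 : lam ^ n = ((m : ℝ) + t) ^ (m + t) * (m + t) ^ m / (t ^ t * t ^ (2 * m)) := by
      rw [hlam, div_pow, ← pow_add, ← pow_add]
      congr 2 <;> omega
    have e2 : (n : ℝ) ^ 2 * m.multichoose t * x ^ m =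
        ((n : ℝ) ^ 2 * (m.multichoose t * m ^ m * t ^ t)) * (m + t) ^ m / (t ^ t * t ^ (2 * m)) := by
      rw [hxe, div_pow, mul_pow, ← pow_mul]
      field_simp
    rw [e1, e2]
    gcongr
  have hI : (m.multichoose t : ℝ) * n.factorial ≤
      (Nat.card {G : SimpleGraph (Fin n) // PathsGraph G m} : ℝ) * (m.factorial * 2 ^ m) := by
    exact_mod_cast card_I_lower m t n ht
  set M : ℝ := (m.factorial : ℝ) * 2 ^ m with hM
  have hM0 : 0 < M := by positivity
  set I : ℝ := (Nat.card {G : SimpleGraph (Fin n) // PathsGraph G m} : ℝ) with hIdef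
  calc M ^ p * (n.factorial * ((x ^ m)⁻¹ * Wt k p x ^ r))
      ≤ M ^ p * (n.factorial * ((x ^ m)⁻¹ *
          (((n : ℝ) ^ 2 * m.multichoose t * x ^ m) * (6 * 20 ^ p) ^ r))) := by
        gcongr
        exact hW.trans (by gcongr)
    _ = M ^ p * ((m.multichoose t * n.factorial) * ((n : ℝ) ^ 2 * (6 * 20 ^ p) ^ r)) := by
        field_simp
    _ ≤ M ^ p * ((I * M) * ((n : ℝ) ^ 2 * (6 * 20 ^ p) ^ r)) := by gcongr
    _ = _ := by ring

theorem exists_K : ∃ K : ℕ, ∀ k : ℕ, K ≤ k → 4 ≤ k ∧ 400 ≤ Real.log k ∧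
    (k : ℝ) ^ (Nat.sqrt k) ≤ 1.3 ^ k := by
  have h1 : ∀ᶠ k : ℕ in Filter.atTop, 400 ≤ Real.log k :=
    (Real.tendsto_log_atTop.comp tendsto_natCast_atTop_atTop).eventually_ge_atTop 400
  have h2 : ∀ᶠ k : ℕ in Filter.atTop, Real.log k ≤ Real.log 1.3 * (k : ℝ) ^ (1 / 2 : ℝ) := by
    have hc : (0 : ℝ) < Real.log 1.3 := Real.log_pos (by norm_num)
    have := (isLittleO_log_rpow_atTop (show (0 : ℝ) < 1 / 2 by norm_num)).bound hc
    have h := tendsto_natCast_atTop_atTop (R := ℝ) |>.eventually this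
    filter_upwards [h] with k hk
    have h3 : (0 : ℝ) ≤ (k : ℝ) ^ (1 / 2 : ℝ) := by positivity
    rw [Real.norm_eq_abs, Real.norm_eq_abs, abs_of_nonneg h3] at hk
    exact (le_abs_self _).trans hk
  obtain ⟨K, hK⟩ := Filter.eventually_atTop.mp ((Filter.eventually_ge_atTop 4).and (h1.and h2))
  refine ⟨K, fun k hk => ?_⟩
  obtain ⟨h4, h400, hl⟩ := hK k hk
  refine ⟨h4, h400, ?_⟩
  have hk0 : (0 : ℝ) < k := by exact_mod_cast (by omega : 0 < k)
  rw [← Real.log_le_log_iff (by positivity) (by positivity), Real.log_pow, Real.log_pow]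
  rw [← Real.sqrt_eq_rpow] at hl
  have hs : (Nat.sqrt k : ℝ) ≤ Real.sqrt k := Real.nat_sqrt_le_real_sqrt
  calc (Nat.sqrt k : ℝ) * Real.log k ≤ Real.sqrt k * (Real.log 1.3 * Real.sqrt k) := by
        apply mul_le_mul hs hl (by linarith) (by positivity)
    _ = (Real.sqrt k * Real.sqrt k) * Real.log 1.3 := by ring
    _ = _ := by rw [Real.mul_self_sqrt hk0.le]

theorem exists_N (ε : ℝ) (hε : 0 < ε) : ∃ N : ℕ, ∀ n : ℕ, N ≤ n → 1 ≤ n ∧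
    ∀ s : ℕ, n ≤ (2 * s) ^ 2 → (n : ℝ) ^ 2 * Real.exp (-(s : ℝ)) ≤ ε := by
  have h := Real.tendsto_pow_mul_exp_neg_atTop_nhds_zero 4
  have h' : Filter.Tendsto (fun x : ℝ => Real.sqrt x / 2) Filter.atTop Filter.atTop :=
    Real.tendsto_sqrt_atTop.atTop_div_const (by norm_num)
  have h2 := (h.comp (h'.comp (tendsto_natCast_atTop_atTop (R := ℝ)))).eventually_lt_const
    (show (0 : ℝ) < ε / 16 by positivity)
  obtain ⟨N, hN⟩ := Filter.eventually_atTop.mp ((Filter.eventually_ge_atTop 1).and h2)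
  refine ⟨N, fun n hn => ⟨(hN n hn).1, fun s hs => ?_⟩⟩
  have h3 := (hN n hn).2
  simp only [Function.comp] at h3
  have hs' : Real.sqrt n / 2 ≤ s := by
    have : Real.sqrt n ≤ 2 * s := by
      apply Real.sqrt_le_iff.mpr
      exact ⟨by positivity, by exact_mod_cast hs⟩
    linarith
  have e : (n : ℝ) ^ 2 = 16 * (Real.sqrt n / 2) ^ 4 := by
    have := Real.sq_sqrt (Nat.cast_nonneg (α := ℝ) n)
    calc (n : ℝ) ^ 2 = (Real.sqrt n ^ 2) ^ 2 := by rw [this]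
      _ = _ := by ring
  calc (n : ℝ) ^ 2 * Real.exp (-(s : ℝ)) ≤ (n : ℝ) ^ 2 * Real.exp (-(Real.sqrt n / 2)) := by
        gcongr
    _ = 16 * ((Real.sqrt n / 2) ^ 4 * Real.exp (-(Real.sqrt n / 2))) := by rw [e]; ring
    _ ≤ ε := by linarith

theorem stmt14 (ε : ℝ) (hε : 0 < ε) :
    ∃ (θ : ℝ) (K N : ℕ), 0 < θ ∧
      ∀ n : ℕ, N ≤ n → ∀ k : ℕ, K ≤ k → k ∣ n →
        ∀ m : ℕ, |(m : ℝ) / n - 1 / 3| ≤ θ →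
          ∑' S : {G : SimpleGraph (Fin n) // PathsGraph G m ∧
              (Real.log k) ^ ((3 * n : ℝ) / k) * (m.factorial : ℝ) * 2 ^ m < (NS k G : ℝ)},
            (NS k S.1 : ℝ) ^ 2 ≤
          ε * ((m.factorial : ℝ) * 2 ^ m) ^ 2 *
            (Nat.card {G : SimpleGraph (Fin n) // PathsGraph G m} : ℝ) := by
  classical
  obtain ⟨K, hK⟩ := exists_K
  obtain ⟨N, hN⟩ := exists_N ε hε
  refine ⟨1 / 100, K, N, by norm_num, ?_⟩
  intro n hn k hk hkn m hm
  obtain ⟨hk4, hL, hkp⟩ := hK k hk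
  obtain ⟨hn1, hfin⟩ := hN n hn
  have hn0 : (0 : ℝ) < n := by exact_mod_cast hn1
  have hk0 : (0 : ℝ) < k := by exact_mod_cast (by omega : 0 < k)
  have hm1 : 1 ≤ m := by
    by_contra h
    have : m = 0 := by omega
    subst this
    rw [abs_le] at hm
    have := hm.1
    norm_num at this
  set p := Nat.sqrt k with hpdef
  have hp2 : 2 ≤ p := Nat.le_sqrt.mpr (by omega)
  have hr : n = k * (n / k) := (Nat.mul_div_cancel' hkn).symm
  have hmom := moment_bound n k m p hkn (by omega) hm1 hn1 hkp hm
  set r := n / k with hrdef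
  have hr1 : 1 ≤ r := by
    rcases Nat.eq_zero_or_pos r with h | h
    · rw [h] at hr; omega
    · exact h
  have hexp : ((3 * n : ℝ) / k) = ((3 * r : ℕ) : ℝ) := by
    have : (n : ℝ) = k * r := by exact_mod_cast hr
    rw [this]; push_cast; field_simp
  set L := Real.log k with hLdef
  set M : ℝ := (m.factorial : ℝ) * 2 ^ m with hM
  have hM0 : 0 < M := by positivity
  have hL0 : 0 < L := by linarith
  set I : ℝ := (Nat.card {G : SimpleGraph (Fin n) // PathsGraph G m} : ℝ) with hI
  set T : ℝ := L ^ (3 * r) * M with hT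
  have hT0 : 0 < T := by positivity
  have hcond : ∀ G : SimpleGraph (Fin n),
      (L ^ ((3 * n : ℝ) / k) * (m.factorial : ℝ) * 2 ^ m < (NS k G : ℝ)) ↔ T < NS k G := by
    intro G
    rw [hexp, Real.rpow_natCast, mul_assoc]
  -- reduce to a finite sum
  have hsum : ∑' S : {G : SimpleGraph (Fin n) // PathsGraph G m ∧
        L ^ ((3 * n : ℝ) / k) * (m.factorial : ℝ) * 2 ^ m < (NS k G : ℝ)},
      (NS k S.1 : ℝ) ^ 2 =
      ∑ S ∈ (Finset.univ : Finset (SimpleGraph (Fin n))).filter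
        (fun S => PathsGraph S m ∧ T < NS k S), (NS k S : ℝ) ^ 2 := by
    rw [tsum_fintype]
    symm
    apply Finset.sum_subtype (p := fun G : SimpleGraph (Fin n) => PathsGraph G m ∧
        L ^ ((3 * n : ℝ) / k) * (m.factorial : ℝ) * 2 ^ m < (NS k G : ℝ))
    intro G
    simp only [Finset.mem_filter, Finset.mem_univ, true_and, hcond]
  rw [hsum]
  have hE : ∑ S ∈ (Finset.univ : Finset (SimpleGraph (Fin n))).filter
        (fun S => PathsGraph S m ∧ T < NS k S), (NS k S : ℝ) ^ 2 * T ^ (p - 1) ≤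
      ∑ S ∈ (Finset.univ : Finset (SimpleGraph (Fin n))).filter (fun S => PathsGraph S m),
        (NS k S : ℝ) ^ (p + 1) := by
    calc _ ≤ ∑ S ∈ (Finset.univ : Finset (SimpleGraph (Fin n))).filter
          (fun S => PathsGraph S m ∧ T < NS k S), (NS k S : ℝ) ^ (p + 1) := by
          apply Finset.sum_le_sum
          intro S hS
          have hS' : T < NS k S := (Finset.mem_filter.mp hS).2.2
          calc (NS k S : ℝ) ^ 2 * T ^ (p - 1) ≤ (NS k S : ℝ) ^ 2 * (NS k S : ℝ) ^ (p - 1) := by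
                gcongr
            _ = (NS k S : ℝ) ^ (p + 1) := by
                rw [← pow_add]; congr 1; omega
      _ ≤ _ := by
          apply Finset.sum_le_sum_of_subset_of_nonneg
          · intro S hS
            simp only [Finset.mem_filter, Finset.mem_univ, true_and] at hS ⊢
            exact hS.1
          · intro S _ _
            positivity
  rw [← Finset.sum_mul] at hE
  have hE2 := hE.trans hmom
  set Q := ∑ S ∈ (Finset.univ : Finset (SimpleGraph (Fin n))).filter
        (fun S => PathsGraph S m ∧ T < NS k S), (NS k S : ℝ) ^ 2 with hQ
  -- the numerical comparison
  have hn2 : n ≤ (2 * (p * r)) ^ 2 := by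
    have h1 : k < (p + 1) * (p + 1) := Nat.lt_succ_sqrt k
    have h2 : k ≤ (2 * p) * (2 * p) := h1.le.trans (Nat.mul_le_mul (by omega) (by omega))
    calc n = k * r := hr
      _ ≤ ((2 * p) * (2 * p)) * (r * r) := Nat.mul_le_mul h2 (Nat.le_mul_of_pos_left _ hr1)
      _ = _ := by ring
  have hf := hfin (p * r) hn2
  have hA : (6 * 20 ^ p : ℝ) ^ r ≤ 120 ^ (p * r) := by
    rw [pow_mul]
    gcongr
    calc (6 * 20 ^ p : ℝ) ≤ 6 ^ p * 20 ^ p := by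
          gcongr
          exact le_self_pow₀ (by norm_num) (by omega)
      _ = 120 ^ p := by rw [← mul_pow]; norm_num
  have hB : (120 : ℝ) ^ (p * r) * Real.exp ((p * r : ℕ) : ℝ) ≤ L ^ (3 * r * (p - 1)) := by
    calc (120 : ℝ) ^ (p * r) * Real.exp ((p * r : ℕ) : ℝ)
        = (120 * Real.exp 1) ^ (p * r) := by
          rw [mul_pow, ← Real.exp_nat_mul, mul_one]
      _ ≤ L ^ (p * r) := by
          gcongr
          have := Real.exp_one_lt_d9
          norm_num at this
          linarith
      _ ≤ L ^ (3 * r * (p - 1)) := by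
          apply pow_le_pow_right₀ (by linarith)
          calc p * r ≤ (3 * (p - 1)) * r := Nat.mul_le_mul (by omega) le_rfl
            _ = _ := by ring
  have hC : (n : ℝ) ^ 2 * (6 * 20 ^ p) ^ r ≤ ε * L ^ (3 * r * (p - 1)) := by
    calc (n : ℝ) ^ 2 * (6 * 20 ^ p) ^ r ≤ (n : ℝ) ^ 2 * 120 ^ (p * r) := by gcongr
      _ = ((n : ℝ) ^ 2 * Real.exp (-((p * r : ℕ) : ℝ))) *
            (120 ^ (p * r) * Real.exp ((p * r : ℕ) : ℝ)) := by
          rw [Real.exp_neg]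
          field_simp
      _ ≤ ε * L ^ (3 * r * (p - 1)) := by gcongr
  have hTp : (0 : ℝ) < T ^ (p - 1) := by positivity
  refine le_of_mul_le_mul_right (hE2.trans ?_) hTp
  calc M ^ (p + 1) * I * ((n : ℝ) ^ 2 * (6 * 20 ^ p) ^ r)
      ≤ M ^ (p + 1) * I * (ε * L ^ (3 * r * (p - 1))) := by gcongr
    _ = ε * M ^ 2 * I * T ^ (p - 1) := by
      have e1 : M ^ (p + 1) = M ^ 2 * M ^ (p - 1) := by
        rw [← pow_add]; congr 1; omega
      have e2 : T ^ (p - 1) = L ^ (3 * r * (p - 1)) * M ^ (p - 1) := by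
        rw [hT, mul_pow (L ^ (3 * r)) M (p - 1), ← pow_mul]
      rw [e1, e2]
      ring
end

section
/- For even n, set Ψ₀(m) = M(n−2m)·n!·m!·2^m·C(n−m−1, m−1), where M(j) = (j−1)!! is the number of perfect matchings of j labelled points (M(0) = 1), and let J_n = {m ∈ ℤ : ⌈(1/3 − δ_n)n⌉ ≤ m ≤ ⌊(1/3 + δ_n)n⌋} with δ_n = (1/2)·(log n)^{−1/3}. Then, as n → ∞ through even integers, Σ_{m ∈ J_n} Ψ₀(m) / (√n · Ψ₀(⌊n/3⌋)) → (2/3)·√π. -/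
/-- `M(j) = (j−1)!!`, the number of perfect matchings of `j` labelled points
(with `M(0) = 1`). -/
def numMatchings (j : ℕ) : ℕ := Nat.doubleFactorial (j - 1)

/-- `Ψ₀(m) = M(n−2m)·n!·m!·2^m·C(n−m−1, m−1)`. -/
noncomputable def Psi0 (n m : ℕ) : ℝ :=
  (numMatchings (n - 2 * m) : ℝ) * (n.factorial : ℝ) * (m.factorial : ℝ) * 2 ^ m *
    ((n - m - 1).choose (m - 1) : ℝ)

/-- `J_n = {m : ⌈(1/3 − δ_n)n⌉ ≤ m ≤ ⌊(1/3 + δ_n)n⌋}` with `δ_n = (1/2)(log n)^{−1/3}`. -/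
noncomputable def Jn (n : ℕ) : Finset ℕ :=
  Finset.Icc ⌈((1 : ℝ) / 3 - (Real.log n) ^ (-(1 : ℝ) / 3) / 2) * n⌉₊
             ⌊((1 : ℝ) / 3 + (Real.log n) ^ (-(1 : ℝ) / 3) / 2) * n⌋₊

lemma psi_pos (h m : ℕ) (hm : 1 ≤ m) (hmh : m ≤ h) : 0 < Psi0 (2*h) m := by
  unfold Psi0 numMatchings
  have h1 : 0 < (2 * h - 2 * m - 1).doubleFactorial := Nat.doubleFactorial_pos _
  have h2 : 0 < (2 * h - m - 1).choose (m - 1) := Nat.choose_pos (by omega)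
  positivity

lemma psi_step (h m : ℕ) (hm : 1 ≤ m) (hmh : m < h) :
    Psi0 (2*h) (m+1) = Psi0 (2*h) m * (((m:ℝ)+1)/m * ((4*(h:ℝ)-4*m)/(2*h-m-1))) := by
  obtain ⟨p, rfl⟩ : ∃ p, m = p + 1 := ⟨m - 1, by omega⟩
  obtain ⟨d, rfl⟩ : ∃ d, h = p + 1 + d + 1 := ⟨h - (p + 1) - 1, by omega⟩
  unfold Psi0 numMatchings
  have e1 : 2 * (p + 1 + d + 1) - 2 * (p + 1 + 1) - 1 = 2 * d - 1 := by omega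
  have e2 : 2 * (p + 1 + d + 1) - 2 * (p + 1) - 1 = 2 * d + 1 := by omega
  have e3 : 2 * (p + 1 + d + 1) - (p + 1 + 1) - 1 = p + 2 * d + 1 := by omega
  have e4 : 2 * (p + 1 + d + 1) - (p + 1) - 1 = p + 2 * d + 2 := by omega
  rw [e1, e2, e3, e4]
  have hdf : (2 * d + 1).doubleFactorial = (2 * d + 1) * (2 * d - 1).doubleFactorial := by
    cases d with
    | zero => simp
    | succ d =>
      have : 2 * (d + 1) - 1 = 2 * d + 1 := by omega
      rw [this]
      exact Nat.doubleFactorial_add_two (2 * d + 1)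
  have c1 := Nat.add_choose_mul_factorial_mul_factorial p (2 * d + 2)
  have c2 := Nat.add_choose_mul_factorial_mul_factorial (p + 1) (2 * d)
  have e5 : p + (2 * d + 2) = p + 2 * d + 2 := by omega
  have e6 : p + 1 + 2 * d = p + 2 * d + 1 := by omega
  rw [← Nat.choose_symm_add, e5] at c1
  rw [← Nat.choose_symm_add, e6] at c2
  have c3 : ((p + 2 * d + 1).choose (p + 1) : ℝ) * ((p + 1) * (p + 2 * d + 2)) =
      ((p + 2 * d + 2).choose p : ℝ) * ((2 * d + 2) * (2 * d + 1)) := by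
    have f1 : (p + 2 * d + 2).factorial = (p + 2 * d + 2) * (p + 2 * d + 1).factorial := rfl
    have f2 : (2 * d + 2).factorial = (2 * d + 2) * ((2 * d + 1) * (2 * d).factorial) := rfl
    have f3 : (p + 1).factorial = (p + 1) * p.factorial := rfl
    rw [f1, ← c2, f2, f3] at c1
    have hp : (0:ℝ) < (p.factorial : ℝ) * ((2 * d).factorial : ℝ) := by positivity
    have c1' := congrArg (Nat.cast : ℕ → ℝ) c1
    push_cast at c1'
    apply mul_right_cancel₀ hp.ne'
    linear_combination -c1'
  have f4 : (p + 1 + 1).factorial = (p + 1 + 1) * (p + 1).factorial := rfl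
  rw [f4, hdf]
  simp only [Nat.add_sub_cancel]
  push_cast
  have d1 : (2 * ((p:ℝ) + 1 + d + 1) - (p + 1) - 1) = p + 2 * d + 2 := by ring
  rw [d1]
  have q1 : (0:ℝ) < p + 2 * d + 2 := by positivity
  have q2 : (0:ℝ) < p + 1 := by positivity
  have c4 : ((p + 2 * d + 1).choose (p + 1) : ℝ) =
      ((p + 2 * d + 2).choose p : ℝ) * ((2 * d + 2) * (2 * d + 1)) / ((p + 1) * (p + 2 * d + 2)) := by
    rw [← c3]; field_simp
  rw [c4]
  field_simp
  ring

lemma log_bd (x : ℝ) (hx : |x| ≤ 1/2) : |Real.log (1+x) - x| ≤ 2 * x^2 := by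
  obtain ⟨h1, h2⟩ := abs_le.1 hx
  have hp : 0 < 1 + x := by linarith
  have u := Real.log_le_sub_one_of_pos hp
  have l := Real.one_sub_inv_le_log_of_pos hp
  have : x - (1 - (1+x)⁻¹) ≤ 2 * x^2 := by
    have : x - (1 - (1+x)⁻¹) = x^2 / (1+x) := by field_simp; ring
    rw [this, div_le_iff₀ hp]
    nlinarith [sq_nonneg x]
  rw [abs_le]
  constructor <;> nlinarith [sq_nonneg x]

lemma quad_aux (u s n : ℝ) (s0 : s ≤ 0) (s1 : -1 ≤ s) (hn : 1000 ≤ n) :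
    72*(u+s)^2 + 9/2*(u+s+1)^2 ≤ 160*u^2 + n := by
  have a1 : s^2 ≤ 1 := by nlinarith
  have a2 : (s+1)^2 ≤ 1 := by nlinarith
  have b1 : (u+s)^2 ≤ 2*u^2+2*s^2 := by nlinarith [sq_nonneg (u-s)]
  have b2 : (u+s+1)^2 ≤ 2*u^2+2*(s+1)^2 := by nlinarith [sq_nonneg (u-(s+1))]
  have := sq_nonneg u
  linarith

lemma cast_aux (k m : ℕ) (j : ℤ) (e : (k:ℤ) + j = m) : (j:ℝ) = (m:ℝ) - (k:ℝ) := by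
  have e' := congrArg (Int.cast : ℤ → ℝ) e
  push_cast at e'
  linarith

lemma cast_nonneg_aux (k : ℕ) (j : ℤ) (e : (0:ℝ) ≤ (k:ℝ) + j) : 0 ≤ (k:ℤ) + j := by
  exact_mod_cast e

lemma real_step (n m k : ℝ) (hn : 1000 ≤ n) (hk : k ≤ n/3) (hk' : n/3 - 1 ≤ k)
    (hm : |m - k| ≤ n/200) :
    |Real.log ((m+1)/m * ((2*n-4*m)/(n-m-1))) + 9/4*((2*(m-k)+1)/n)| ≤
      200 * (1/n + (m-k)^2/n^2) := by
  obtain ⟨a1, a2⟩ := abs_le.1 hm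
  have n0 : 0 < n := by linarith
  have mpos : n/4 ≤ m := by linarith
  have m0 : 0 < m := by linarith
  obtain ⟨y, hy⟩ : ∃ y, y = m - n/3 := ⟨_, rfl⟩
  have A : |(-6*y/n)| ≤ 1/2 := by
    rw [abs_le]; constructor
    · rw [le_div_iff₀ n0]; linarith
    · rw [div_le_iff₀ n0]; linarith
  have B : |(-3*(y+1)/(2*n))| ≤ 1/2 := by
    rw [abs_le]; constructor
    · rw [le_div_iff₀ (by linarith)]; linarith
    · rw [div_le_iff₀ (by linarith)]; linarith
  have LA := log_bd _ A
  have LB := log_bd _ B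
  have A' := abs_le.1 A
  have B' := abs_le.1 B
  have e : (m+1)/m * ((2*n-4*m)/(n-m-1)) = (1+1/m) * ((1 + -6*y/n) / (1 + -3*(y+1)/(2*n))) := by
    have h1 : (m+1)/m = 1+1/m := by field_simp
    have h2 : 2*n-4*m = (2*n/3) * (1 + -6*y/n) := by rw [hy]; field_simp; ring
    have h3 : n-m-1 = (2*n/3) * (1 + -3*(y+1)/(2*n)) := by rw [hy]; field_simp; ring
    rw [h1, h2, h3, mul_div_mul_left]
    positivity
  have p1 : 0 < 1 + 1/m := by positivity
  rw [e, Real.log_mul p1.ne' (div_pos (by linarith) (by linarith)).ne',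
    Real.log_div (by linarith) (by linarith)]
  have L1 : 0 ≤ Real.log (1+1/m) := Real.log_nonneg (by have : 0 < 1/m := by positivity
                                                        linarith)
  have L2 : Real.log (1+1/m) ≤ 4 * (1/n) := by
    have := Real.log_le_sub_one_of_pos p1
    have h : 1/m ≤ 4 * (1/n) := by
      rw [mul_one_div, div_le_div_iff₀ m0 n0]; linarith
    linarith
  obtain ⟨la, la'⟩ := abs_le.1 LA
  obtain ⟨lb, lb'⟩ := abs_le.1 LB
  have Q : 2 * (-6*y/n)^2 + 2 * (-3*(y+1)/(2*n))^2 ≤ 160 * ((m-k)^2/n^2) + 1/n := by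
    have : 2 * (-6*y/n)^2 + 2 * (-3*(y+1)/(2*n))^2 = (72*y^2 + 9/2*(y+1)^2)/n^2 := by
      field_simp; ring
    rw [this]
    have : 160 * ((m-k)^2/n^2) + 1/n = (160*(m-k)^2 + n)/n^2 := by field_simp
    rw [this]
    refine div_le_div_of_nonneg_right ?_ (by positivity)
    obtain ⟨s, hs⟩ : ∃ s, s = k - n/3 := ⟨_, rfl⟩
    obtain ⟨u, hu⟩ : ∃ u, u = m - k := ⟨_, rfl⟩
    have : y = u + s := by rw [hy, hu, hs]; ring
    rw [this, ← hu]
    have s0 : s ≤ 0 := by linarith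
    have s1 : -1 ≤ s := by linarith
    exact quad_aux u s n s0 s1 hn
  have R : -6*y/n - (-3*(y+1)/(2*n)) + 9/4*((2*(m-k)+1)/n) =
      (-(9/2)*(k-n/3) + 15/4) * (1/n) := by
    rw [hy]; field_simp; ring
  have n1 : 0 < 1/n := by positivity
  have R1 : (-(9/2)*(k-n/3) + 15/4) * (1/n) ≤ 10 * (1/n) := by gcongr; linarith
  have R2 : 0 ≤ (-(9/2)*(k-n/3) + 15/4) * (1/n) := mul_nonneg (by linarith) n1.le
  have S : 0 ≤ (m-k)^2/n^2 := by positivity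
  rw [abs_le]
  constructor <;> linarith

/-- log of psi with Gaussian part compensated -/
noncomputable def ee (h m : ℕ) : ℝ :=
  Real.log (Psi0 (2*h) m) + 9/4 * (((m:ℝ) - ((2*h/3 : ℕ) : ℝ))^2 / (2*h))

lemma k_bd (h : ℕ) : ((2*h/3 : ℕ) : ℝ) ≤ (2*h:ℝ)/3 ∧ (2*h:ℝ)/3 - 1 ≤ ((2*h/3 : ℕ) : ℝ) := by
  have h1 : 3 * (2*h/3) ≤ 2*h := by omega
  have h2 : 2*h ≤ 3 * (2*h/3) + 3 := by omega
  have h1' : 3 * ((2*h/3 : ℕ):ℝ) ≤ 2*h := by exact_mod_cast h1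
  have h2' : 2*(h:ℝ) ≤ 3 * ((2*h/3 : ℕ):ℝ) + 3 := by exact_mod_cast h2
  constructor <;> linarith

lemma ee_step (h m : ℕ) (hh : 500 ≤ h) (hm : |(m:ℝ) - ((2*h/3 : ℕ) : ℝ)| ≤ (2*h:ℝ)/200) :
    |ee h (m+1) - ee h m| ≤
      200 * (1/(2*h:ℝ) + ((m:ℝ) - ((2*h/3 : ℕ) : ℝ))^2/(2*h:ℝ)^2) := by
  obtain ⟨k1, k2⟩ := k_bd h
  have hh' : (500:ℝ) ≤ h := by exact_mod_cast hh
  obtain ⟨a1, a2⟩ := abs_le.1 hm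
  have m1 : 1 ≤ m := by
    have : (1:ℝ) ≤ m := by linarith
    exact_mod_cast this
  have m2 : m < h := by
    have : (m:ℝ) < h := by linarith
    exact_mod_cast this
  have R := real_step (2*h) m _ (by linarith) k1 k2 hm
  convert R using 2
  unfold ee
  have m1' : (1:ℝ) ≤ m := by exact_mod_cast m1
  have m2' : (m:ℝ)+1 ≤ h := by exact_mod_cast m2
  have pp : 0 < ((m:ℝ)+1)/m * ((4*(h:ℝ)-4*m)/(2*h-m-1)) := by
    apply mul_pos (by positivity) (div_pos (by linarith) (by linarith))
  rw [psi_step h m m1 m2, Real.log_mul (psi_pos h m m1 m2.le).ne' pp.ne']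
  have : 2 * (2 * (h:ℝ)) - 4 * m = 4*(h:ℝ)-4*m := by ring
  rw [this]
  push_cast
  field_simp
  ring

lemma ee_up (h : ℕ) (hh : 500 ≤ h) (i : ℕ) (hi : (i:ℝ) ≤ (2*h:ℝ)/200) :
    |ee h (2*h/3 + i) - ee h (2*h/3)| ≤ 200 * (i/(2*h:ℝ) + (i:ℝ)^3/(2*h:ℝ)^2) := by
  induction i with
  | zero => simp
  | succ i ih =>
    push_cast at hi
    have hs := ee_step h (2*h/3+i) hh (by
      push_cast; rw [add_sub_cancel_left, abs_of_nonneg (by positivity)]; linarith)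
    have ih := ih (by linarith)
    push_cast at hs
    rw [add_sub_cancel_left] at hs
    have t := abs_sub_le (ee h (2*h/3+(i+1))) (ee h (2*h/3+i)) (ee h (2*h/3))
    rw [← add_assoc] at t ⊢
    refine t.trans ((add_le_add hs ih).trans ?_)
    have hp : (0:ℝ) < 2*h := by have : (500:ℝ) ≤ h := by exact_mod_cast hh
                                linarith
    have q : ((i:ℝ)^2 + i^3)/(2*h:ℝ)^2 ≤ ((i:ℝ)+1)^3/(2*h:ℝ)^2 := by
      gcongr
      have : (0:ℝ) ≤ i := by positivity
      nlinarith [sq_nonneg (i:ℝ)]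
    rw [add_div] at q
    push_cast
    rw [add_div]
    linarith

lemma ee_down (h : ℕ) (hh : 500 ≤ h) (i : ℕ) (hi : (i:ℝ) ≤ (2*h:ℝ)/200) (m : ℕ)
    (hm : m + i = 2*h/3) :
    |ee h m - ee h (2*h/3)| ≤ 200 * (i/(2*h:ℝ) + (i:ℝ)^3/(2*h:ℝ)^2) := by
  induction i generalizing m with
  | zero => simp at hm; simp [hm]
  | succ i ih =>
    push_cast at hi
    have e : (m:ℝ) - ((2*h/3 : ℕ) : ℝ) = -(i+1) := by rw [← hm]; push_cast; ring
    have hs := ee_step h m hh (by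
      rw [e, abs_neg, abs_of_nonneg (by positivity)]; linarith)
    have ih := ih (by linarith) (m+1) (by omega)
    rw [e, abs_sub_comm] at hs
    have t := abs_sub_le (ee h m) (ee h (m+1)) (ee h (2*h/3))
    refine t.trans ((add_le_add hs ih).trans ?_)
    have hp : (0:ℝ) < 2*h := by have : (500:ℝ) ≤ h := by exact_mod_cast hh
                                linarith
    have q : ((-((i:ℝ)+1))^2 + i^3)/(2*h:ℝ)^2 ≤ ((i:ℝ)+1)^3/(2*h:ℝ)^2 := by
      gcongr
      have : (0:ℝ) ≤ i := by positivity
      nlinarith [sq_nonneg (i:ℝ)]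
    rw [add_div] at q
    push_cast
    rw [add_div (i:ℝ)]
    linarith

lemma ee_bd (h : ℕ) (hh : 500 ≤ h) (m : ℕ)
    (hm : |(m:ℝ) - ((2*h/3 : ℕ) : ℝ)| ≤ (2*h:ℝ)/200) :
    |ee h m - ee h (2*h/3)| ≤ 200 * (|(m:ℝ) - ((2*h/3 : ℕ) : ℝ)|/(2*h:ℝ) +
      |(m:ℝ) - ((2*h/3 : ℕ) : ℝ)|^3/(2*h:ℝ)^2) := by
  rcases le_total (2*h/3) m with hl | hl
  · obtain ⟨i, rfl⟩ := Nat.exists_eq_add_of_le hl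
    have e : |((2*h/3 + i : ℕ):ℝ) - ((2*h/3 : ℕ) : ℝ)| = i := by
      push_cast; rw [add_sub_cancel_left, abs_of_nonneg (by positivity)]
    rw [e] at hm ⊢
    exact ee_up h hh i hm
  · obtain ⟨i, hi⟩ := Nat.exists_eq_add_of_le hl
    have e : |(m:ℝ) - ((2*h/3 : ℕ) : ℝ)| = i := by
      rw [hi]; push_cast; rw [sub_add_cancel_left, abs_neg, abs_of_nonneg (by positivity)]
    rw [e] at hm ⊢
    exact ee_down h hh i hm m hi.symm

lemma ratio_eq (h : ℕ) (hh : 500 ≤ h) (m : ℕ)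
    (hm : |(m:ℝ) - ((2*h/3 : ℕ) : ℝ)| ≤ (2*h:ℝ)/200) :
    Psi0 (2*h) m / Psi0 (2*h) (2*h/3) =
      Real.exp ((ee h m - ee h (2*h/3)) - 9/4 * (((m:ℝ) - ((2*h/3 : ℕ) : ℝ))^2 / (2*h))) := by
  obtain ⟨k1, k2⟩ := k_bd h
  have hh' : (500:ℝ) ≤ h := by exact_mod_cast hh
  obtain ⟨a1, a2⟩ := abs_le.1 hm
  have m1 : 1 ≤ m := by
    have : (1:ℝ) ≤ m := by linarith
    exact_mod_cast this
  have m2 : m < h := by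
    have : (m:ℝ) < h := by linarith
    exact_mod_cast this
  have p1 := psi_pos h m m1 m2.le
  have p2 := psi_pos h (2*h/3) (by omega) (by omega)
  have : (ee h m - ee h (2*h/3)) - 9/4 * (((m:ℝ) - ((2*h/3 : ℕ) : ℝ))^2 / (2*h))
     = Real.log (Psi0 (2*h) m) - Real.log (Psi0 (2*h) (2*h/3)) := by
    unfold ee; ring
  rw [this, Real.exp_sub, Real.exp_log p1, Real.exp_log p2]

open Filter Topology MeasureTheory in
lemma delta_zero : Tendsto (fun h : ℕ => (Real.log ((2*h : ℕ):ℝ)) ^ (-(1 : ℝ) / 3) / 2)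
    atTop (𝓝 0) := by
  have h1 : Tendsto (fun h : ℕ => ((2*h : ℕ):ℝ)) atTop atTop :=
    tendsto_natCast_atTop_atTop.comp (tendsto_id.const_mul_atTop' (by norm_num))
  have h2 := (tendsto_rpow_neg_atTop (y := 1/3) (by norm_num)).comp (Real.tendsto_log_atTop.comp h1)
  have h3 := h2.div_const 2
  simp only [zero_div] at h3
  refine h3.congr fun h => ?_
  simp only [Function.comp]
  norm_num

open Filter Topology MeasureTheory in
lemma n_top : Tendsto (fun h : ℕ => ((2*h : ℕ):ℝ)) atTop atTop :=
    tendsto_natCast_atTop_atTop.comp (tendsto_id.const_mul_atTop' (by norm_num))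

open Filter Topology MeasureTheory in
lemma sqrt_top : Tendsto (fun h : ℕ => √((2*h : ℕ):ℝ)) atTop atTop :=
    Real.tendsto_sqrt_atTop.comp n_top

open Filter Topology MeasureTheory in
lemma delta_big (T : ℝ) : ∀ᶠ h : ℕ in atTop, 2 + T * √((2*h : ℕ):ℝ) ≤
    (Real.log ((2*h : ℕ):ℝ)) ^ (-(1 : ℝ) / 3) / 2 * ((2*h : ℕ):ℝ) := by
  have h2 := (tendsto_exp_mul_div_rpow_atTop (1/3) (1/2) (by norm_num)).comp
    (Real.tendsto_log_atTop.comp n_top)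
  filter_upwards [h2.eventually_ge_atTop (2*(T+2)), sqrt_top.eventually_ge_atTop 1,
    n_top.eventually_ge_atTop 2] with h a b c
  simp only [Function.comp] at a
  generalize ((2*h : ℕ):ℝ) = n at *
  have n0 : 0 < n := by linarith
  have lp : 0 < Real.log n := Real.log_pos (by linarith)
  have e1 : Real.exp (1/2 * Real.log n) = √n := by
    rw [Real.sqrt_eq_rpow, Real.rpow_def_of_pos n0, mul_comm]
  have e2 : (Real.log n) ^ (-(1 : ℝ) / 3) = ((Real.log n) ^ ((1 : ℝ) / 3))⁻¹ := by
    rw [← Real.rpow_neg lp.le]; norm_num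
  rw [e1, div_eq_mul_inv, ← e2] at a
  have hs : √n * √n = n := Real.mul_self_sqrt n0.le
  calc 2 + T * √n ≤ (T+2) * √n := by nlinarith
    _ ≤ ((√n * (Real.log n) ^ (-(1 : ℝ) / 3)) / 2) * √n := by
        apply mul_le_mul_of_nonneg_right _ (by positivity); linarith
    _ = (Real.log n) ^ (-(1 : ℝ) / 3) / 2 * (√n * √n) := by ring
    _ = _ := by rw [hs]

/-- step function -/
noncomputable def gg (h : ℕ) (t : ℝ) : ℝ :=
  ∑ m ∈ Jn (2*h), Set.indicator
    (Set.Ico (((m:ℝ) - ((2*h/3 : ℕ) : ℝ)) / √((2*h : ℕ):ℝ))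
      (((m:ℝ) - ((2*h/3 : ℕ) : ℝ) + 1) / √((2*h : ℕ):ℝ)))
    (fun _ => Psi0 (2*h) m / Psi0 (2*h) (2*h/3)) t

open MeasureTheory in
lemma gg_integral (h : ℕ) (hh : 0 < h) : ∫ t, gg h t =
    (∑ m ∈ Jn (2*h), Psi0 (2*h) m) / (√((2*h : ℕ):ℝ) * Psi0 (2*h) (2*h/3)) := by
  unfold gg
  have s0 : 0 < √((2*h : ℕ):ℝ) := Real.sqrt_pos.2 (by exact_mod_cast (by omega : 0 < 2*h))
  rw [integral_finsetSum]
  · rw [Finset.sum_div]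
    refine Finset.sum_congr rfl fun m _ => ?_
    rw [integral_indicator measurableSet_Ico, setIntegral_const, Measure.real, Real.volume_Ico,
      ← sub_div, add_sub_cancel_left, ENNReal.toReal_ofReal (by positivity), smul_eq_mul,
      div_mul_div_comm, one_mul]
  · intro m _
    rw [integrable_indicator_iff measurableSet_Ico]
    exact integrableOn_const (by simp)

lemma gg_meas (h : ℕ) : Measurable (gg h) := by
  unfold gg
  exact Finset.measurable_sum _ fun m _ => measurable_const.indicator measurableSet_Ico

lemma ico_iff (s : ℝ) (hs : 0 < s) (k m : ℕ) (t : ℝ) :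
    t ∈ Set.Ico (((m:ℝ) - (k:ℝ)) / s) (((m:ℝ) - (k:ℝ) + 1) / s) ↔ (k:ℤ) + ⌊t * s⌋ = m := by
  rw [Set.mem_Ico, div_le_iff₀ hs, lt_div_iff₀ hs]
  have : (k:ℤ) + ⌊t * s⌋ = m ↔ ⌊t * s⌋ = (m:ℤ) - k := by omega
  rw [this, Int.floor_eq_iff]
  push_cast
  rfl

lemma gg_val (h : ℕ) (hh : 0 < h) (t : ℝ) (m : ℕ) (hm : m ∈ Jn (2*h))
    (e : ((2*h/3 : ℕ):ℤ) + ⌊t * √((2*h : ℕ):ℝ)⌋ = m) :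
    gg h t = Psi0 (2*h) m / Psi0 (2*h) (2*h/3) := by
  unfold gg
  have s0 : 0 < √((2*h : ℕ):ℝ) := Real.sqrt_pos.2 (by exact_mod_cast (by omega : 0 < 2*h))
  rw [Finset.sum_eq_single_of_mem m hm]
  · rw [Set.indicator_of_mem]
    exact (ico_iff _ s0 _ _ _).2 e
  · intro b _ hb
    apply Set.indicator_of_notMem
    rw [ico_iff _ s0, e]
    exact_mod_cast hb.symm

lemma gg_zero (h : ℕ) (hh : 0 < h) (t : ℝ)
    (e : ¬ ∃ m ∈ Jn (2*h), ((2*h/3 : ℕ):ℤ) + ⌊t * √((2*h : ℕ):ℝ)⌋ = m) :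
    gg h t = 0 := by
  unfold gg
  have s0 : 0 < √((2*h : ℕ):ℝ) := Real.sqrt_pos.2 (by exact_mod_cast (by omega : 0 < 2*h))
  apply Finset.sum_eq_zero
  intro b hb
  apply Set.indicator_of_notMem
  rw [ico_iff _ s0]
  exact fun h' => e ⟨b, hb, h'⟩

open Filter in
lemma J_small : ∀ᶠ h : ℕ in atTop, ∀ m ∈ Jn (2*h),
    |(m:ℝ) - ((2*h/3 : ℕ) : ℝ)| ≤ (2*h:ℝ)/200 := by
  filter_upwards [delta_zero.eventually (gt_mem_nhds (show (0:ℝ) < 1/400 by norm_num)),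
    delta_big 0, eventually_ge_atTop 500] with h a b c m hm
  obtain ⟨k1, k2⟩ := k_bd h
  have c' : (500:ℝ) ≤ h := by exact_mod_cast c
  unfold Jn at hm
  rw [Finset.mem_Icc, Nat.ceil_le] at hm
  generalize (Real.log ((2*h : ℕ):ℝ)) ^ (-(1 : ℝ) / 3) / 2 = d at *
  push_cast at *
  have d0 : 0 ≤ (1/3 + d) * (2*(h:ℝ)) := by nlinarith
  rw [Nat.le_floor_iff d0] at hm
  obtain ⟨m1, m2⟩ := hm
  have : d * (2*(h:ℝ)) ≤ 1/400 * (2*(h:ℝ)) := by gcongr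
  rw [abs_le]
  constructor <;> linarith

open Filter in
lemma J_mem (T : ℝ) : ∀ᶠ h : ℕ in atTop, ∀ m : ℕ,
    |(m:ℝ) - ((2*h/3 : ℕ) : ℝ)| ≤ 1 + T * √((2*h : ℕ):ℝ) → m ∈ Jn (2*h) := by
  filter_upwards [delta_big T, delta_big 0] with h a b m hm
  obtain ⟨k1, k2⟩ := k_bd h
  unfold Jn
  rw [Finset.mem_Icc, Nat.ceil_le]
  generalize (Real.log ((2*h : ℕ):ℝ)) ^ (-(1 : ℝ) / 3) / 2 = d at *
  generalize √((2*h : ℕ):ℝ) = s at *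
  push_cast at *
  have h0 : (0:ℝ) ≤ h := by positivity
  have d0 : 0 ≤ (1/3 + d) * (2*(h:ℝ)) := by nlinarith
  rw [Nat.le_floor_iff d0]
  obtain ⟨m1, m2⟩ := abs_le.1 hm
  constructor <;> linarith

lemma ratio_bd (h : ℕ) (hh : 500 ≤ h) (m : ℕ)
    (hm : |(m:ℝ) - ((2*h/3 : ℕ) : ℝ)| ≤ (2*h:ℝ)/200) (t : ℝ)
    (e : ((2*h/3 : ℕ):ℤ) + ⌊t * √((2*h : ℕ):ℝ)⌋ = m) :
    Psi0 (2*h) m / Psi0 (2*h) (2*h/3) ≤ Real.exp 3 * Real.exp (-(5/8) * t^2) := by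
  rw [ratio_eq h hh m hm, ← Real.exp_add]
  apply Real.exp_le_exp.2
  have B := (abs_le.1 (ee_bd h hh m hm)).2
  have f1 := Int.floor_le (t * √((2*h : ℕ):ℝ))
  have f2 := Int.lt_floor_add_one (t * √((2*h : ℕ):ℝ))
  have hs : √((2*h : ℕ):ℝ) * √((2*h : ℕ):ℝ) = 2*h := by
    rw [Real.mul_self_sqrt (by positivity)]; push_cast; ring
  have hp : (1000:ℝ) ≤ 2*h := by have : (500:ℝ) ≤ h := by exact_mod_cast hh
                                 linarith
  have e'' : ((⌊t * √((2*h : ℕ):ℝ)⌋ : ℤ):ℝ) = (m:ℝ) - ((2*h/3 : ℕ) : ℝ) :=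
    cast_aux _ _ _ e
  rw [e''] at f1 f2
  generalize √((2*h : ℕ):ℝ) = s at *
  generalize (m:ℝ) - ((2*h/3 : ℕ) : ℝ) = j at *
  generalize (2*h:ℝ) = n at *
  have n0 : 0 < n := by linarith
  have b1 : |j|/n ≤ 1/200 := by rw [div_le_iff₀ n0]; linarith
  have b2 : |j|^3/n^2 ≤ (1/200) * (j^2/n) := by
    rw [← sq_abs j]
    have : |j|^3/n^2 = (|j|/n) * (|j|^2/n) := by field_simp
    rw [this]
    gcongr
  have b3 : t^2 ≤ 2 * (j^2/n) + 2/1000 := by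
    have q : t^2 * n ≤ 2*j^2 + 2 := by
      rw [← hs]
      have : (t*s)^2 ≤ 2*j^2+2 := by
        nlinarith [sq_nonneg (t*s - j - 1), sq_nonneg (j-1), sq_nonneg (j+1),
          mul_nonneg (sub_nonneg.2 f1) (sub_nonneg.2 f2.le)]
      linarith
    have : t^2 ≤ (2*j^2+2)/n := by rw [le_div_iff₀ n0]; exact q
    have q2 : 2/n ≤ 2/1000 := by gcongr
    rw [add_div] at this
    have q3 : 2 * j^2/n = 2*(j^2/n) := by ring
    linarith
  linarith

open Filter Topology in
lemma floor_lim (t : ℝ) : Tendsto (fun s : ℝ => (⌊t * s⌋ : ℝ) / s) atTop (𝓝 t) := by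
  have h1 : Tendsto (fun s : ℝ => t - 1 / s) atTop (𝓝 (t - 0)) :=
    tendsto_const_nhds.sub (tendsto_const_nhds.div_atTop tendsto_id)
  rw [sub_zero] at h1
  refine tendsto_of_tendsto_of_tendsto_of_le_of_le' h1 tendsto_const_nhds ?_ ?_
  · filter_upwards [eventually_gt_atTop 0] with s hs
    have : t - 1/s = (t*s - 1)/s := by field_simp
    rw [this]
    gcongr
    exact (Int.sub_one_lt_floor _).le
  · filter_upwards [eventually_gt_atTop 0] with s hs
    rw [div_le_iff₀ hs]
    exact Int.floor_le _

open Filter Topology in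
lemma gg_lim (t : ℝ) : Tendsto (fun h => gg h t) atTop (𝓝 (Real.exp (-(9/4) * t^2))) := by
  have hx : Tendsto (fun h : ℕ => (⌊t * √((2*h : ℕ):ℝ)⌋ : ℝ) / √((2*h : ℕ):ℝ)) atTop (𝓝 t) :=
    (floor_lim t).comp sqrt_top
  have key : ∀ᶠ h : ℕ in atTop, ∃ E : ℝ, gg h t = Real.exp (E - 9/4 *
      ((⌊t * √((2*h : ℕ):ℝ)⌋ : ℝ) / √((2*h : ℕ):ℝ))^2) ∧
      |E| ≤ 200 * ((|(⌊t * √((2*h : ℕ):ℝ)⌋ : ℝ) / √((2*h : ℕ):ℝ)| +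
        |(⌊t * √((2*h : ℕ):ℝ)⌋ : ℝ) / √((2*h : ℕ):ℝ)|^3) / √((2*h : ℕ):ℝ)) := by
    filter_upwards [J_small, J_mem |t|, sqrt_top.eventually_ge_atTop (4 * (|t| + 2)),
      eventually_ge_atTop 500] with h js jm sb hh
    obtain ⟨k1, k2⟩ := k_bd h
    have f1 := Int.floor_le (t * √((2*h : ℕ):ℝ))
    have f2 := Int.lt_floor_add_one (t * √((2*h : ℕ):ℝ))
    have hs : √((2*h : ℕ):ℝ) * √((2*h : ℕ):ℝ) = 2*h := by
      rw [Real.mul_self_sqrt (by positivity)]; push_cast; ring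
    have ht := abs_nonneg t
    have s0 : 0 < √((2*h : ℕ):ℝ) := by linarith
    have ab : |(⌊t * √((2*h : ℕ):ℝ)⌋:ℝ)| ≤ 1 + |t| * √((2*h : ℕ):ℝ) := by
      have := abs_le.1 (le_of_eq (abs_mul t √((2*h : ℕ):ℝ)))
      rw [abs_of_pos s0] at this
      rw [abs_le]; constructor <;> linarith
    have kj : 0 ≤ ((2*h/3 : ℕ):ℤ) + ⌊t * √((2*h : ℕ):ℝ)⌋ := by
      have : (0:ℝ) ≤ ((2*h/3 : ℕ):ℝ) + ⌊t * √((2*h : ℕ):ℝ)⌋ := by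
        have := (abs_le.1 ab).1
        nlinarith
      exact cast_nonneg_aux _ _ this
    obtain ⟨m, hm⟩ := Int.eq_ofNat_of_zero_le kj
    have e'' : ((⌊t * √((2*h : ℕ):ℝ)⌋ : ℤ):ℝ) = (m:ℝ) - ((2*h/3 : ℕ) : ℝ) :=
      cast_aux _ _ _ hm
    have mJ : m ∈ Jn (2*h) := jm m (by rw [← e'']; exact ab)
    have sm := js m mJ
    refine ⟨ee h m - ee h (2*h/3), ?_, ?_⟩
    · rw [gg_val h (by omega) t m mJ hm, ratio_eq h hh m sm, e'', div_pow, sq (√_), hs]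
    · refine (ee_bd h hh m sm).trans (le_of_eq ?_)
      rw [e'', abs_div, abs_of_pos s0, ← hs]
      field_simp
  have hb : Tendsto (fun h : ℕ => 200 * ((|(⌊t * √((2*h : ℕ):ℝ)⌋ : ℝ) / √((2*h : ℕ):ℝ)| +
        |(⌊t * √((2*h : ℕ):ℝ)⌋ : ℝ) / √((2*h : ℕ):ℝ)|^3) / √((2*h : ℕ):ℝ))) atTop (𝓝 0) := by
    have := ((hx.abs.add (hx.abs.pow 3)).div_atTop sqrt_top).const_mul 200
    rwa [mul_zero] at this
  have key' : ∀ h : ℕ, ∃ E : ℝ, (∃ E : ℝ, gg h t = Real.exp (E - 9/4 *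
      ((⌊t * √((2*h : ℕ):ℝ)⌋ : ℝ) / √((2*h : ℕ):ℝ))^2) ∧
      |E| ≤ 200 * ((|(⌊t * √((2*h : ℕ):ℝ)⌋ : ℝ) / √((2*h : ℕ):ℝ)| +
        |(⌊t * √((2*h : ℕ):ℝ)⌋ : ℝ) / √((2*h : ℕ):ℝ)|^3) / √((2*h : ℕ):ℝ))) →
      (gg h t = Real.exp (E - 9/4 *
      ((⌊t * √((2*h : ℕ):ℝ)⌋ : ℝ) / √((2*h : ℕ):ℝ))^2) ∧
      |E| ≤ 200 * ((|(⌊t * √((2*h : ℕ):ℝ)⌋ : ℝ) / √((2*h : ℕ):ℝ)| +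
        |(⌊t * √((2*h : ℕ):ℝ)⌋ : ℝ) / √((2*h : ℕ):ℝ)|^3) / √((2*h : ℕ):ℝ))) := by
    intro h
    by_cases hE : ∃ E : ℝ, gg h t = Real.exp (E - 9/4 *
      ((⌊t * √((2*h : ℕ):ℝ)⌋ : ℝ) / √((2*h : ℕ):ℝ))^2) ∧
      |E| ≤ 200 * ((|(⌊t * √((2*h : ℕ):ℝ)⌋ : ℝ) / √((2*h : ℕ):ℝ)| +
        |(⌊t * √((2*h : ℕ):ℝ)⌋ : ℝ) / √((2*h : ℕ):ℝ)|^3) / √((2*h : ℕ):ℝ))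
    · obtain ⟨E, hE⟩ := hE
      exact ⟨E, fun _ => hE⟩
    · exact ⟨0, fun h' => absurd h' hE⟩
  choose E hE using key'
  have E0 : Tendsto E atTop (𝓝 0) := by
    apply squeeze_zero_norm' _ hb
    filter_upwards [key] with h hk
    exact (hE h hk).2
  have L := Real.continuous_exp.tendsto _ |>.comp (E0.sub ((hx.pow 2).const_mul (9/4)))
  have e0 : (0:ℝ) - 9/4 * t^2 = -(9/4) * t^2 := by ring
  rw [e0] at L
  refine L.congr' ?_
  filter_upwards [key] with h hk
  exact (hE h hk).1.symm

open Filter Topology MeasureTheory in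
lemma main_lim : Tendsto (fun h : ℕ =>
    (∑ m ∈ Jn (2*h), Psi0 (2*h) m) / (√((2*h : ℕ):ℝ) * Psi0 (2*h) (2*h/3)))
    atTop (𝓝 (2 / 3 * √Real.pi)) := by
  have I : ∫ t : ℝ, Real.exp (-(9/4) * t^2) = 2 / 3 * √Real.pi := by
    rw [integral_gaussian]
    have : Real.pi / (9/4) = (2/3)^2 * Real.pi := by ring
    rw [this, Real.sqrt_mul (by positivity), Real.sqrt_sq (by norm_num)]
  rw [← I]
  have D : Tendsto (fun h => ∫ t, gg h t) atTop (𝓝 (∫ t : ℝ, Real.exp (-(9/4) * t^2))) := by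
    apply tendsto_integral_filter_of_dominated_convergence
      (fun t => Real.exp 3 * Real.exp (-(5/8) * t^2))
    · exact Eventually.of_forall fun h => (gg_meas h).aestronglyMeasurable
    · filter_upwards [J_small, eventually_ge_atTop 500] with h js hh
      refine Eventually.of_forall fun t => ?_
      by_cases e : ∃ m ∈ Jn (2*h), ((2*h/3 : ℕ):ℤ) + ⌊t * √((2*h : ℕ):ℝ)⌋ = m
      · obtain ⟨m, hm, e⟩ := e
        rw [gg_val h (by omega) t m hm e, Real.norm_of_nonneg]
        · exact ratio_bd h hh m (js m hm) t e
        · rw [ratio_eq h hh m (js m hm)]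
          positivity
      · rw [gg_zero h (by omega) t e]
        simp only [norm_zero]
        positivity
    · exact (integrable_exp_neg_mul_sq (by norm_num)).const_mul _
    · exact Eventually.of_forall gg_lim
  refine D.congr' ?_
  filter_upwards [eventually_ge_atTop 1] with h hh
  exact gg_integral h (by omega)

/-- As `n → ∞` through even integers,
`Σ_{m ∈ J_n} Ψ₀(m) / (√n · Ψ₀(⌊n/3⌋)) → (2/3)·√π`. -/
theorem stmt15 (N : ℕ → ℕ) (hNeven : ∀ i, Even (N i)) (hNpos : ∀ i, 0 < N i)
    (hN : Filter.Tendsto N Filter.atTop Filter.atTop) :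
    Filter.Tendsto
      (fun i => (∑ m ∈ Jn (N i), Psi0 (N i) m) / (Real.sqrt (N i) * Psi0 (N i) (N i / 3)))
      Filter.atTop (nhds (2 / 3 * Real.sqrt Real.pi)) := by
  have hd : Filter.Tendsto (fun i => N i / 2) Filter.atTop Filter.atTop :=
    (Nat.tendsto_div_const_atTop (by norm_num)).comp hN
  refine (main_lim.comp hd).congr fun i => ?_
  have : 2 * (N i / 2) = N i := Nat.two_mul_div_two_of_even (hNeven i)
  simp only [Function.comp, this]
end
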